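/- arXiv:2408.11146 — 4 statements merged into one kernel-verified Lean document; each statement's English description precedes it below -/
import Mathlib

section
/- Let an ε-Markov chain on a finite state space V with absorbing set A be such that every state has a path to A. If MaxOrder ≥ 1 (i.e., some state has order at least 1), then the chain contains a pseudosink. -/
/-!
Reachability by regular edges is a preorder on the finite set `V`. A state of order at least `1`
does not reach `A` by regular edges alone (`order_eq_zero_of_reach`). Among the states it reaches,
choose `j` whose own reachable set is smallest: every state reachable from `j` then reaches `j`
back, so the component of `j` equals its reachable set. That component is closed under regular
edges and misses `A`. Since `j` has a path to `A`, this path leaves the component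
(`exists_step_out`), and the leaving step cannot be a regular edge, so it is an ε-edge.
-/

open Filter Topology
open scoped Classical

noncomputable section

/-- A regular edge of the ε-Markov chain: positive regular coefficient. -/
def RegEdge {V : Type*} (r : V → V → ℝ) (a b : V) : Prop := 0 < r a b

/-- An ε-edge of the ε-Markov chain: zero regular coefficient and positive ε-coefficient. -/
def EpsEdge {V : Type*} (r c : V → V → ℝ) (a b : V) : Prop := r a b = 0 ∧ 0 < c a b

/-- Number of ε-edges along a path (given as the list of visited states). -/
def epsCount {V : Type*} (r c : V → V → ℝ) (l : List V) : ℕ :=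
  (l.zip l.tail).countP fun p => decide (EpsEdge r c p.1 p.2)

/-- A path from `i` to the absorbing set `A`: a nonempty list of states starting at `i`,
each consecutive step being a regular edge or an ε-edge, ending at a state of `A`. -/
def IsPathToA {V : Type*} (r c : V → V → ℝ) (A : Set V) (i : V) (l : List V) : Prop :=
  l.head? = some i ∧ l.Chain' (fun a b => RegEdge r a b ∨ EpsEdge r c a b) ∧
  ∃ x ∈ A, l.getLast? = some x

/-- The order of a state: the minimum number of ε-edges on any path from `i` to `A`. -/
def order {V : Type*} (r c : V → V → ℝ) (A : Set V) (i : V) : ℕ :=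
  sInf {n | ∃ l : List V, IsPathToA r c A i l ∧ epsCount r c l = n}

/-- An rSCC: a strongly connected component of the graph of regular edges, i.e. the
equivalence class of some state under mutual reachability via regular edges. -/
def IsRSCC {V : Type*} (r : V → V → ℝ) (N : Set V) : Prop :=
  ∃ i, N = {j | Relation.ReflTransGen (RegEdge r) i j ∧ Relation.ReflTransGen (RegEdge r) j i}

/-- A pseudosink: an rSCC disjoint from `A`, with no regular edge leaving it,
but with at least one outgoing ε-edge. -/
def IsPseudosink {V : Type*} (r c : V → V → ℝ) (A N : Set V) : Prop :=
  IsRSCC r N ∧ (∀ x ∈ N, x ∉ A) ∧ (∀ x ∈ N, ∀ y, RegEdge r x y → y ∈ N) ∧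
  ∃ x ∈ N, ∃ y, y ∉ N ∧ EpsEdge r c x y

/-- A path made of regular edges only has no ε-edge, since an ε-edge has zero regular coefficient. -/
theorem exists_path_of_reach {V : Type*} (r c : V → V → ℝ) (A : Set V) {i x : V} (hx : x ∈ A)
    (h : Relation.ReflTransGen (RegEdge r) i x) :
    ∃ l : List V, IsPathToA r c A i l ∧ epsCount r c l = 0 := by
  induction h using Relation.ReflTransGen.head_induction_on with
  | refl => exact ⟨[x], ⟨by simp, List.isChain_singleton _, x, hx, by simp⟩, by simp [epsCount]⟩
  | @head a b hab _ ih =>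
    obtain ⟨l, ⟨hh, hc, y, hy, hl⟩, h0⟩ := ih
    cases l with
    | nil => simp at hh
    | cons b' t =>
      obtain rfl : b' = b := by simpa using hh
      have hne : ¬ EpsEdge r c a b' := fun he => hab.ne' he.1
      refine ⟨a :: b' :: t, ⟨by simp, List.isChain_cons_cons.2 ⟨Or.inl hab, hc⟩, y, hy, ?_⟩, ?_⟩
      · simpa using hl
      · simp only [epsCount, List.tail_cons, List.zip_cons_cons, List.countP_cons] at h0 ⊢
        simp [h0, hne]

theorem order_eq_zero_of_reach {V : Type*} (r c : V → V → ℝ) (A : Set V) {i x : V} (hx : x ∈ A)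
    (h : Relation.ReflTransGen (RegEdge r) i x) : order r c A i = 0 :=
  Nat.sInf_eq_zero.2 (Or.inl (exists_path_of_reach r c A hx h))

/-- A chain that starts inside `N` and ends outside `N` has a step leaving `N`. -/
theorem exists_step_out {V : Type*} {R : V → V → Prop} {N : Set V} {y : V} (hy : y ∉ N) :
    ∀ (l : List V) (i : V), i ∈ N → l.head? = some i → l.IsChain R → l.getLast? = some y →
      ∃ a ∈ N, ∃ b, b ∉ N ∧ R a b
  | [], _, _, hh, _, _ => by simp at hh
  | [a], i, hi, hh, _, hl => by
    simp only [List.head?_cons, List.getLast?_singleton, Option.some.injEq] at hh hl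
    exact absurd (hl ▸ hh ▸ hi) hy
  | a :: b :: t, i, hi, hh, hc, hl => by
    obtain rfl : a = i := by simpa using hh
    rw [List.isChain_cons_cons] at hc
    by_cases hb : b ∈ N
    · exact exists_step_out hy (b :: t) b hb rfl hc.2 (by simpa using hl)
    · exact ⟨a, hi, b, hb, hc.1⟩

/-- in an ε-Markov chain in which every state has a path to the absorbing
set `A`, if some state has order at least `1` then there exists a pseudosink. -/
theorem exists_pseudosink_of_maxOrder_pos
    {V : Type*} [Fintype V] (r c : V → V → ℝ) (A : Set V)
    (hr0 : ∀ i j, 0 ≤ r i j) (hr1 : ∀ i, ∑ j, r i j = 1)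
    (hc0 : ∀ i j, 0 ≤ c i j)
    (hAr : ∀ i ∈ A, r i i = 1) (hAc : ∀ i ∈ A, ∀ j, c i j = 0)
    (hpath : ∀ i, ∃ l : List V, IsPathToA r c A i l)
    (horder : ∃ i, 1 ≤ order r c A i) :
    ∃ N : Set V, IsPseudosink r c A N := by
  obtain ⟨i, hi⟩ := horder
  -- `j` has the smallest reachable set among the states that `i` reaches by regular edges.
  obtain ⟨j, hij, hmin⟩ := Set.exists_min_image {j | Relation.ReflTransGen (RegEdge r) i j}
    (fun j => {k | Relation.ReflTransGen (RegEdge r) j k}.ncard) (Set.toFinite _)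
    ⟨i, Relation.ReflTransGen.refl⟩
  have hback : ∀ k, Relation.ReflTransGen (RegEdge r) j k →
      Relation.ReflTransGen (RegEdge r) k j := by
    intro k hjk
    -- The reachable set of `k` lies in that of `j` and is at least as large, so they coincide.
    have heq : {m | Relation.ReflTransGen (RegEdge r) k m} =
        {m | Relation.ReflTransGen (RegEdge r) j m} :=
      Set.eq_of_subset_of_ncard_le (fun m hm => hjk.trans hm) (hmin k (hij.trans hjk))
        (Set.toFinite _)
    have hjj : j ∈ {m | Relation.ReflTransGen (RegEdge r) j m} := Relation.ReflTransGen.refl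
    rwa [← heq] at hjj
  have hdisj : ∀ x, Relation.ReflTransGen (RegEdge r) j x → x ∉ A := by
    intro x hx hxA
    have := order_eq_zero_of_reach r c A hxA (hij.trans hx)
    omega
  have hclosed : ∀ x y, Relation.ReflTransGen (RegEdge r) j x → RegEdge r x y →
      Relation.ReflTransGen (RegEdge r) j y := fun x y hx hxy => hx.tail hxy
  refine ⟨_, ⟨j, rfl⟩, fun x hx => hdisj x hx.1,
    fun x hx y hxy => ⟨hclosed x y hx.1 hxy, hback y (hclosed x y hx.1 hxy)⟩, ?_⟩
  obtain ⟨l, hh, hc, y, hyA, hl⟩ := hpath j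
  obtain ⟨a, ha, b, hb, hab⟩ := exists_step_out
    (N := {k | Relation.ReflTransGen (RegEdge r) j k ∧ Relation.ReflTransGen (RegEdge r) k j})
    (fun hy => hdisj y hy.1 hyA) l j
    ⟨Relation.ReflTransGen.refl, Relation.ReflTransGen.refl⟩ hh hc hl
  refine ⟨a, ha, b, hb, hab.resolve_left fun hreg => hb ?_⟩
  exact ⟨hclosed a b ha.1 hreg, hback b (hclosed a b ha.1 hreg)⟩

end
end

section
/- Let an ε-Markov chain on a finite state space V with absorbing set A be such that every state has a path to A, and suppose MaxOrder ≥ 1. Reclassify the edges as follows: the new regular edges are the old regular edges together with all outgoing ε-edges of pseudosinks, and the new ε-edges are the remaining old ε-edges. Then the maximum order of any state, computed with respect to the new edge classification, is at most MaxOrder − 1. -/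
/-!
Fix a state `i`; the goal is a path from `i` to `A` with at most `MaxOrder - 1` new ε-edges.
Every old step is still a step, and every new ε-edge is an old one, so a path never gets more
expensive under the new classification (`CostPath.reclassify`). This settles the states of order
`0`, because `MaxOrder ≥ 1`.

If `i` has positive order, follow regular edges from `i` into a terminal rSCC `N`
(`exists_terminal`). It misses `A`, since otherwise `i` would have order `0`, and it has an
outgoing ε-edge, since its states have paths to `A` (`CostPath.exists_exit`); so `N` is a
pseudosink. An optimal path from a state of `N` to `A` has at most `MaxOrder` ε-edges, and it
leaves `N` by an ε-edge, which has become regular (`CostPath.reclassify_lt`). Prepending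
the regular walk from `i` into `N` costs nothing (`CostPath.of_reflTransGen`).
-/

open Filter Topology
open scoped Classical

noncomputable section

/-- Number of ε-edges (w.r.t. an abstract classification `Eps`) along a path. -/
def epsCountRel {V : Type*} (Eps : V → V → Prop) (l : List V) : ℕ :=
  (l.zip l.tail).countP fun p => decide (Eps p.1 p.2)

/-- A path from `i` to `A`, each step a regular edge or an ε-edge (w.r.t. an
abstract classification of edges into regular ones `Reg` and ε-ones `Eps`). -/
def IsPathToARel {V : Type*} (Reg Eps : V → V → Prop) (A : Set V) (i : V) (l : List V) : Prop :=
  l.head? = some i ∧ l.Chain' (fun a b => Reg a b ∨ Eps a b) ∧ ∃ x ∈ A, l.getLast? = some x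

/-- The order of a state: minimum number of ε-edges on any path from `i` to `A`. -/
def orderRel {V : Type*} (Reg Eps : V → V → Prop) (A : Set V) (i : V) : ℕ :=
  sInf {n | ∃ l : List V, IsPathToARel Reg Eps A i l ∧ epsCountRel Eps l = n}

/-- A pseudosink w.r.t. an abstract edge classification: an rSCC (an equivalence class of
mutual reachability via regular edges) disjoint from `A`, with no regular edge leaving it,
but with at least one outgoing ε-edge. -/
def IsPseudosinkRel {V : Type*} (Reg Eps : V → V → Prop) (A N : Set V) : Prop :=
  (∃ i, N = {j | Relation.ReflTransGen Reg i j ∧ Relation.ReflTransGen Reg j i}) ∧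
  (∀ x ∈ N, x ∉ A) ∧ (∀ x ∈ N, ∀ y, Reg x y → y ∈ N) ∧ ∃ x ∈ N, ∃ y, y ∉ N ∧ Eps x y

/-- `CostPath Reg Eps A i n`: some path from `i` to `A` has exactly `n` ε-edges. Inductive
counterpart of the list-based paths `IsPathToARel` with the count `epsCountRel`. -/
inductive CostPath {V : Type*} (Reg Eps : V → V → Prop) (A : Set V) : V → ℕ → Prop
  | nil {i : V} : i ∈ A → CostPath Reg Eps A i 0
  | cons {a b : V} {n : ℕ} : (Reg a b ∨ Eps a b) → CostPath Reg Eps A b n →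
      CostPath Reg Eps A a (n + if Eps a b then 1 else 0)

theorem costPath_iff {V : Type*} {Reg Eps : V → V → Prop} {A : Set V} {i : V} {n : ℕ} :
    CostPath Reg Eps A i n ↔ ∃ l, IsPathToARel Reg Eps A i l ∧ epsCountRel Eps l = n := by
  constructor
  · intro h
    induction h with
    | nil hi => exact ⟨[_], ⟨rfl, List.isChain_singleton _, _, hi, rfl⟩, rfl⟩
    | @cons a b n hab _ ih =>
      obtain ⟨l, ⟨hh, hc, x, hx, hl⟩, hn⟩ := ih
      cases l with
      | nil => simp at hh
      | cons b' l =>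
        obtain rfl : b' = b := by simpa using hh
        refine ⟨a :: b' :: l, ⟨rfl, List.isChain_cons_cons.2 ⟨hab, hc⟩, x, hx, ?_⟩, ?_⟩
        · rw [List.getLast?_cons_cons]; exact hl
        · rw [← hn]; simp [epsCountRel, List.countP_cons]
  · rintro ⟨l, ⟨hh, hc, x, hx, hl⟩, rfl⟩
    induction l generalizing i with
    | nil => simp at hh
    | cons a l ih =>
      obtain rfl : a = i := by simpa using hh
      cases l with
      | nil =>
        obtain rfl : a = x := by simpa using hl
        exact CostPath.nil hx
      | cons b l =>
        obtain ⟨hab, hc⟩ := List.isChain_cons_cons.1 hc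
        rw [List.getLast?_cons_cons] at hl
        have h := CostPath.cons hab (ih rfl hc hl)
        simpa [epsCountRel, List.countP_cons] using h

theorem orderRel_le {V : Type*} {Reg Eps : V → V → Prop} {A : Set V} {i : V} {n : ℕ}
    (h : CostPath Reg Eps A i n) : orderRel Reg Eps A i ≤ n :=
  Nat.sInf_le (costPath_iff.1 h)

/-- The order is attained by a path. The existence of some path is needed, as the infimum of the
empty set is `0`. -/
theorem costPath_orderRel {V : Type*} {Reg Eps : V → V → Prop} {A : Set V} {i : V}
    (h : ∃ l, IsPathToARel Reg Eps A i l) : CostPath Reg Eps A i (orderRel Reg Eps A i) := by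
  obtain ⟨l, hl⟩ := h
  exact costPath_iff.2 (Nat.sInf_mem
    (s := {n | ∃ l : List V, IsPathToARel Reg Eps A i l ∧ epsCountRel Eps l = n})
    ⟨_, l, hl, rfl⟩)

theorem CostPath.of_reflTransGen {V : Type*} {Reg Eps R : V → V → Prop} {A : Set V} {i j : V}
    {n : ℕ} (hR : ∀ a b, R a b → Reg a b ∧ ¬ Eps a b) (hij : Relation.ReflTransGen R i j)
    (h : CostPath Reg Eps A j n) : CostPath Reg Eps A i n := by
  induction hij using Relation.ReflTransGen.head_induction_on with
  | refl => exact h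
  | head hab _ ih => simpa [(hR _ _ hab).2] using CostPath.cons (.inl (hR _ _ hab).1) ih

/-- Coarsening the classification (no step is lost, no ε-edge is created) does not increase
costs. -/
theorem CostPath.reclassify {V : Type*} {Reg Eps Reg' Eps' : V → V → Prop} {A : Set V} {i : V}
    {n : ℕ} (hstep : ∀ a b, Reg a b ∨ Eps a b → Reg' a b ∨ Eps' a b)
    (heps : ∀ a b, Eps' a b → Eps a b) (h : CostPath Reg Eps A i n) :
    ∃ m ≤ n, CostPath Reg' Eps' A i m := by
  induction h with
  | nil hi => exact ⟨0, le_rfl, .nil hi⟩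
  | @cons a b n hab _ ih =>
    obtain ⟨m, hm, ih⟩ := ih
    refine ⟨_, ?_, .cons (hstep _ _ hab) ih⟩
    have := heps a b
    split_ifs <;> first | omega | tauto

/-- If `N` misses `A` and every step leaving `N` is an ε-edge that is no longer an ε-edge after
reclassification, then the cost of a path starting in `N` strictly decreases. -/
theorem CostPath.reclassify_lt {V : Type*} {Reg Eps Reg' Eps' : V → V → Prop} {A N : Set V}
    {i : V} {n : ℕ} (hstep : ∀ a b, Reg a b ∨ Eps a b → Reg' a b ∨ Eps' a b)
    (heps : ∀ a b, Eps' a b → Eps a b) (hNA : ∀ x ∈ N, x ∉ A)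
    (hexit : ∀ a ∈ N, ∀ b ∉ N, Reg a b ∨ Eps a b → Eps a b ∧ ¬ Eps' a b)
    (h : CostPath Reg Eps A i n) (hi : i ∈ N) : ∃ m < n, CostPath Reg' Eps' A i m := by
  induction h with
  | nil hA => exact absurd hA (hNA _ hi)
  | @cons a b n hab h ih =>
    by_cases hb : b ∈ N
    · obtain ⟨m, hm, ih⟩ := ih hb
      refine ⟨_, ?_, .cons (hstep _ _ hab) ih⟩
      have := heps a b
      split_ifs <;> first | omega | tauto
    · obtain ⟨m, hm, h'⟩ := h.reclassify hstep heps
      obtain ⟨h1, h2⟩ := hexit a hi b hb hab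
      refine ⟨_, ?_, .cons (hstep _ _ hab) h'⟩
      simp only [h1, h2, if_true, if_false]
      omega

theorem CostPath.exists_exit {V : Type*} {Reg Eps : V → V → Prop} {A N : Set V} {i : V} {n : ℕ}
    (hNA : ∀ x ∈ N, x ∉ A) (h : CostPath Reg Eps A i n) (hi : i ∈ N) :
    ∃ x ∈ N, ∃ y, y ∉ N ∧ (Reg x y ∨ Eps x y) := by
  induction h with
  | nil hA => exact absurd hA (hNA _ hi)
  | @cons a b n hab h ih =>
    by_cases hb : b ∈ N
    · exact ih hb
    · exact ⟨a, hi, b, hb, hab⟩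

/-- In a finite directed graph every vertex reaches a terminal strongly connected component: a
reachable vertex with the fewest reachable vertices lies in one. -/
theorem exists_terminal {V : Type*} [Finite V] (R : V → V → Prop) (i : V) :
    ∃ j, Relation.ReflTransGen R i j ∧
      ∀ k, Relation.ReflTransGen R j k → Relation.ReflTransGen R k j := by
  obtain ⟨j, hj, hmin⟩ := Set.exists_min_image {j | Relation.ReflTransGen R i j}
    (fun j => Set.ncard {k | Relation.ReflTransGen R j k}) (Set.toFinite _) ⟨i, .refl⟩
  refine ⟨j, hj, fun k hk => ?_⟩
  have hsub : {x | Relation.ReflTransGen R k x} ⊆ {x | Relation.ReflTransGen R j x} :=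
    fun x hx => hk.trans hx
  have heq := Set.eq_of_subset_of_ncard_le hsub (hmin k (hj.trans hk)) (Set.toFinite _)
  have hjj : j ∈ {x | Relation.ReflTransGen R j x} := .refl
  rwa [← heq] at hjj

/-- reclassifying the outgoing ε-edges of all pseudosinks as regular edges
decreases the maximum order by at least one. -/
theorem maxOrder_decreases_after_collapsing_pseudosinks
    {V : Type*} [Fintype V] (r c : V → V → ℝ) (A : Set V)
    (hr0 : ∀ i j, 0 ≤ r i j) (hr1 : ∀ i, ∑ j, r i j = 1)
    (hc0 : ∀ i j, 0 ≤ c i j)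
    (hAr : ∀ i ∈ A, r i i = 1) (hAc : ∀ i ∈ A, ∀ j, c i j = 0)
    (hpath : ∀ i, ∃ l : List V, IsPathToARel (RegEdge r) (EpsEdge r c) A i l)
    (hord : 1 ≤ Finset.univ.sup fun i => orderRel (RegEdge r) (EpsEdge r c) A i) :
    ∀ i, orderRel
        (fun a b => RegEdge r a b ∨
          ∃ N, IsPseudosinkRel (RegEdge r) (EpsEdge r c) A N ∧ a ∈ N ∧ b ∉ N ∧ EpsEdge r c a b)
        (fun a b => EpsEdge r c a b ∧
          ¬ ∃ N, IsPseudosinkRel (RegEdge r) (EpsEdge r c) A N ∧ a ∈ N ∧ b ∉ N)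
        A i ≤ (Finset.univ.sup fun i => orderRel (RegEdge r) (EpsEdge r c) A i) - 1 := by
  intro i
  set M := Finset.univ.sup fun i => orderRel (RegEdge r) (EpsEdge r c) A i with hM
  have hle : ∀ j, orderRel (RegEdge r) (EpsEdge r c) A j ≤ M := fun j =>
    Finset.le_sup (f := fun i => orderRel (RegEdge r) (EpsEdge r c) A i) (Finset.mem_univ j)
  have hdisj : ∀ a b, RegEdge r a b → ¬ EpsEdge r c a b := fun a b h h' => h.ne' h'.1
  -- The new regular and ε-edges.
  set Reg' : V → V → Prop := fun a b => RegEdge r a b ∨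
    ∃ N, IsPseudosinkRel (RegEdge r) (EpsEdge r c) A N ∧ a ∈ N ∧ b ∉ N ∧ EpsEdge r c a b
    with hReg'
  set Eps' : V → V → Prop := fun a b => EpsEdge r c a b ∧
    ¬ ∃ N, IsPseudosinkRel (RegEdge r) (EpsEdge r c) A N ∧ a ∈ N ∧ b ∉ N with hEps'
  have hstep : ∀ a b, RegEdge r a b ∨ EpsEdge r c a b → Reg' a b ∨ Eps' a b := by
    rintro a b (h | h)
    · exact .inl (.inl h)
    · by_cases hN : ∃ N, IsPseudosinkRel (RegEdge r) (EpsEdge r c) A N ∧ a ∈ N ∧ b ∉ N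
      · obtain ⟨N, hN, ha, hb⟩ := hN
        exact .inl (.inr ⟨N, hN, ha, hb, h⟩)
      · exact .inr ⟨h, hN⟩
  have heps : ∀ a b, Eps' a b → EpsEdge r c a b := fun a b h => h.1
  rcases Nat.eq_zero_or_pos (orderRel (RegEdge r) (EpsEdge r c) A i) with h0 | hpos
  · obtain ⟨m, hm, h⟩ := (costPath_orderRel (hpath i)).reclassify hstep heps
    have := orderRel_le h
    omega
  · obtain ⟨j, hij, hterm⟩ := exists_terminal (RegEdge r) i
    set N : Set V := {k | Relation.ReflTransGen (RegEdge r) j k ∧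
      Relation.ReflTransGen (RegEdge r) k j} with hN
    have hjN : j ∈ N := ⟨.refl, .refl⟩
    have hNA : ∀ x ∈ N, x ∉ A := fun x hx hxA => by
      -- A regular walk from `i` into `A` would give `i` order `0`.
      have := orderRel_le (CostPath.of_reflTransGen (fun a b h => ⟨h, hdisj a b h⟩)
        (hij.trans hx.1) (CostPath.nil (Reg := RegEdge r) (Eps := EpsEdge r c) hxA))
      omega
    have hclosed : ∀ x ∈ N, ∀ y, RegEdge r x y → y ∈ N := fun x hx y hxy =>
      ⟨hx.1.tail hxy, hterm y (hx.1.tail hxy)⟩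
    have hj := costPath_orderRel (hpath j)
    have hps : IsPseudosinkRel (RegEdge r) (EpsEdge r c) A N := by
      obtain ⟨x, hx, y, hy, hxy⟩ := hj.exists_exit hNA hjN
      exact ⟨⟨j, rfl⟩, hNA, hclosed, x, hx, y, hy,
        hxy.resolve_left fun h => hy (hclosed x hx y h)⟩
    obtain ⟨m, hm, h⟩ := hj.reclassify_lt hstep heps hNA
      (fun a ha b hb hab => ⟨hab.resolve_left fun h => hb (hclosed a ha b h),
        fun h => h.2 ⟨N, hps, ha, hb⟩⟩) hjN
    have := orderRel_le (h.of_reflTransGen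
      (fun a b hab => ⟨.inl hab, fun h => hdisj a b hab h.1⟩) hij)
    have := hle j
    omega

end
end

section
/- For every starting state i ∈ N_P and every outgoing ε-edge (x,y) ∈ O of the pseudosink, the first-exit probability satisfies lim_{ε→0⁺} Pr_i[L_{(x,y)}](ε) = c x y · π x / (Σ_{(x',y') ∈ O} c x' y' · π x'); in particular, the limit is independent of the starting state i ∈ N_P. -/
/-!
Let `G` be the Green function of `P(ε)` restricted to the pseudosink `N`, that is,
`G j = Σ_n (P(ε)|_N ^ n) i j`, the expected number of visits to `j` before leaving `N`. Grouping
paths by length shows that the first-exit probability along `(x, y)` is `G x · P(ε) x y`, and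
`P(ε) x y = ε · c x y` because no regular edge leaves `N`. It remains to find the limit of
`H = ε G`.

Let `e a = Σ_{b ∉ N} c a b`. The row sums of `P(ε)|_N` are `1 - ε · e a`, so unit mass started at
`i` leaks out at rate `ε e`. Hence the visits to a state with `e > 0` are summable, and by
irreducibility those to every state are (`summable_pow_apply`). The recursion
`G = δ_i + G P(ε)` and the fact that all the mass is eventually lost, `Σ_a H a · e a = 1`, combine
into one square linear system
`H (I - P(ε) + e πᵀ) = ε δ_i + π`.
Its matrix is continuous in `ε`, and at `ε = 0` it is `I - Q + e πᵀ`, which is invertible: a vector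
in its left kernel is stationary for `Q`, hence a multiple of `π`, and is orthogonal to `e`, while
`π · e > 0` (`det_ne_zero_of_irreducible`). So `H` tends to the solution of the system at `ε = 0`,
which is `π / (π · e)` and does not depend on `i` (`green_tendsto`).
-/

open Filter Topology
open scoped Classical

noncomputable section

/-- Product of transition weights along a path (given as the list of visited states). -/
def pathWeight {W : Type*} (M : W → W → ℝ) (l : List W) : ℝ :=
  ((l.zip l.tail).map fun p => M p.1 p.2).prod

/-- Row sums `t i = Σ_j c i j` of the ε-coefficients. -/
def rowT {V : Type*} [Fintype V] (c : V → V → ℝ) (i : V) : ℝ := ∑ j, c i j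

/-- The transition matrix `P(ε) i j = (1 − ε·t i)·r i j + ε·c i j` of the ε-Markov chain. -/
def Pmat {V : Type*} [Fintype V] (r c : V → V → ℝ) (ε : ℝ) (i j : V) : ℝ :=
  (1 - ε * rowT c i) * r i j + ε * c i j

/-- The first-exit probability `Pr_i[L_{(x,y)}](ε)`: the sum over all finite paths
`i = v₀, …, v_m = x` with every `v_j ∈ NP` of `(Π_{j<m} P(ε) v_j v_{j+1}) · P(ε) x y`. -/
def exitProb {V : Type*} [Fintype V] (r c : V → V → ℝ) (NP : Set V) (i x y : V) (ε : ℝ) : ℝ :=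
  ∑' l : {l : List V // l.head? = some i ∧ l.getLast? = some x ∧ ∀ v ∈ l, v ∈ NP},
    pathWeight (Pmat r c ε) l.1 * Pmat r c ε x y

/-! ### Stationary vectors of an irreducible stochastic matrix -/

section Kernel

open scoped Matrix

variable {N : Type*} [Fintype N]

/-- A zero of a nonnegative stationary vector propagates backwards along positive entries. -/
lemma stationary_eq_zero {Q : N → N → ℝ} (hQ0 : ∀ a b, 0 ≤ Q a b)
    (hirr : ∀ a b, Relation.ReflTransGen (fun a b => 0 < Q a b) a b)
    {w : N → ℝ} (hw : ∀ a, 0 ≤ w a) (hs : ∀ b, ∑ a, w a * Q a b = w b)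
    {b : N} (hb : w b = 0) (a : N) : w a = 0 := by
  induction hirr a b using Relation.ReflTransGen.head_induction_on with
  | refl => exact hb
  | @head a d had _ ih =>
    have h := Finset.single_le_sum (f := fun a => w a * Q a d)
      (fun k _ => mul_nonneg (hw k) (hQ0 k d)) (Finset.mem_univ a)
    simp only [hs d, ih] at h
    have h2 : w a * Q a d = 0 := le_antisymm h (mul_nonneg (hw a) (hQ0 a d))
    exact (mul_eq_zero.1 h2).resolve_right had.ne'

lemma stationary_pos {Q : N → N → ℝ} (hQ0 : ∀ a b, 0 ≤ Q a b)
    (hirr : ∀ a b, Relation.ReflTransGen (fun a b => 0 < Q a b) a b)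
    {π : N → ℝ} (hπ0 : ∀ a, 0 ≤ π a) (hπ1 : ∑ a, π a = 1)
    (hs : ∀ b, ∑ a, π a * Q a b = π b) (a : N) : 0 < π a := by
  refine lt_of_le_of_ne (hπ0 a) fun h => ?_
  have h0 := stationary_eq_zero hQ0 hirr hπ0 hs h.symm
  simp [h0] at hπ1

/-- Every stationary vector, of whatever signs, is a multiple of `π`: subtracting
`(min w / π) • π` leaves a nonnegative stationary vector with a zero. -/
lemma stationary_unique [Nonempty N] {Q : N → N → ℝ} (hQ0 : ∀ a b, 0 ≤ Q a b)
    (hirr : ∀ a b, Relation.ReflTransGen (fun a b => 0 < Q a b) a b)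
    {π : N → ℝ} (hπ : ∀ a, 0 < π a)
    (hs : ∀ b, ∑ a, π a * Q a b = π b)
    {w : N → ℝ} (hw : ∀ b, ∑ a, w a * Q a b = w b) : ∃ t : ℝ, ∀ a, w a = t * π a := by
  obtain ⟨m, hm⟩ := Finite.exists_min fun a => w a / π a
  refine ⟨w m / π m, fun a => ?_⟩
  have key := stationary_eq_zero (w := fun a => w a - w m / π m * π a) hQ0 hirr
    (fun a => sub_nonneg.2 ((le_div_iff₀ (hπ a)).1 (hm a)))
    (fun b => by
      simp only [sub_mul, Finset.sum_sub_distrib, mul_assoc, ← Finset.mul_sum, hs, hw])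
    (b := m) (by simp [(hπ m).ne']) a
  simpa [sub_eq_zero] using key

lemma vecMul_one_sub_add_apply [DecidableEq N] (P : Matrix N N ℝ) (e π v : N → ℝ) (b : N) :
    (v ᵥ* (1 - P + Matrix.vecMulVec e π)) b =
      v b - ∑ a, v a * P a b + (∑ a, v a * e a) * π b := by
  rw [Matrix.vecMul_add, Matrix.vecMul_sub, Matrix.vecMul_one, Matrix.vecMul_vecMulVec]
  simp [Matrix.vecMul, dotProduct]

/-- `I - Q + e πᵀ` is invertible: a left null vector `v` satisfies `v · e = 0` (sum its equations),
so it is stationary and a multiple of `π`, and `π · e ≠ 0`. -/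
lemma det_ne_zero_of_irreducible [DecidableEq N] {Q : Matrix N N ℝ} (hQ0 : ∀ a b, 0 ≤ Q a b)
    (hQ1 : ∀ a, ∑ b, Q a b = 1)
    (hirr : ∀ a b, Relation.ReflTransGen (fun a b => 0 < Q a b) a b)
    {π : N → ℝ} (hπ0 : ∀ a, 0 ≤ π a) (hπ1 : ∑ a, π a = 1)
    (hs : ∀ b, ∑ a, π a * Q a b = π b) {e : N → ℝ} (he : ∑ a, π a * e a ≠ 0) :
    (1 - Q + Matrix.vecMulVec e π).det ≠ 0 := by
  intro hdet
  obtain ⟨v, hv, hv0⟩ := Matrix.exists_vecMul_eq_zero_iff.2 hdet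
  have hcoord : ∀ b, v b - ∑ a, v a * Q a b + (∑ a, v a * e a) * π b = 0 := fun b => by
    rw [← vecMul_one_sub_add_apply, hv0, Pi.zero_apply]
  -- summing over the columns kills the stochastic part
  have hve : ∑ a, v a * e a = 0 := by
    have h : ∑ b, (v b - ∑ a, v a * Q a b + (∑ a, v a * e a) * π b) = 0 :=
      Finset.sum_eq_zero fun b _ => hcoord b
    rw [Finset.sum_add_distrib, Finset.sum_sub_distrib, Finset.sum_comm, ← Finset.mul_sum] at h
    simpa [← Finset.mul_sum, hQ1, hπ1] using h
  have : Nonempty N := by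
    by_contra hne
    rw [not_nonempty_iff] at hne
    simp at hπ1
  obtain ⟨t, ht⟩ := stationary_unique hQ0 hirr (stationary_pos hQ0 hirr hπ0 hπ1 hs) hs
    (w := v) (fun b => by linarith [hve ▸ hcoord b])
  have ht0 : t = 0 := by
    simp only [ht, mul_assoc, ← Finset.mul_sum] at hve
    exact (mul_eq_zero.1 hve).resolve_right he
  exact hv (funext fun a => by simp [ht, ht0])

/-! ### Expected numbers of visits of a leaking chain -/

/-- For a substochastic matrix `P` losing mass `δ a` at `a`, the mass lost before time `n` is what
is missing from the total mass at time `n`. -/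
lemma sum_range_leak_le [DecidableEq N] {P : Matrix N N ℝ} {δ : N → ℝ}
    (hP0 : ∀ a b, 0 ≤ P a b) (hP1 : ∀ a, ∑ b, P a b = 1 - δ a) (i : N) (n : ℕ) :
    (∀ a, 0 ≤ (P ^ n) i a) ∧
      ∑ m ∈ Finset.range n, ∑ a, (P ^ m) i a * δ a = 1 - ∑ a, (P ^ n) i a := by
  induction n with
  | zero =>
    refine ⟨fun a => ?_, by simp [Matrix.one_apply]⟩
    simp only [pow_zero, Matrix.one_apply]
    split_ifs <;> norm_num
  | succ n ih =>
    refine ⟨fun a => ?_, ?_⟩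
    · rw [pow_succ, Matrix.mul_apply]
      exact Finset.sum_nonneg fun b _ => mul_nonneg (ih.1 b) (hP0 b a)
    · have h : ∑ a, (P ^ (n + 1)) i a = ∑ a, (P ^ n) i a * (1 - δ a) := by
        simp only [pow_succ, Matrix.mul_apply]
        rw [Finset.sum_comm]
        simp only [← Finset.mul_sum, hP1]
      rw [Finset.sum_range_succ, ih.2, h]
      simp only [mul_sub, mul_one, Finset.sum_sub_distrib]
      ring

/-- Visits to a leaking state are summable, and summability propagates backwards along
positive entries. -/
lemma summable_pow_apply [DecidableEq N] {P : Matrix N N ℝ} {δ : N → ℝ}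
    (hP0 : ∀ a b, 0 ≤ P a b) (hP1 : ∀ a, ∑ b, P a b = 1 - δ a) (hδ : ∀ a, 0 ≤ δ a)
    (hirr : ∀ a b, Relation.ReflTransGen (fun a b => 0 < P a b) a b)
    {z : N} (hz : 0 < δ z) (i j : N) : Summable fun n => (P ^ n) i j := by
  have hn0 : ∀ n a, 0 ≤ (P ^ n) i a := fun n => (sum_range_leak_le hP0 hP1 i n).1
  induction hirr j z using Relation.ReflTransGen.head_induction_on with
  | refl =>
    rw [← summable_mul_right_iff hz.ne']
    refine summable_of_sum_range_le (c := 1) (fun n => mul_nonneg (hn0 n z) hz.le) fun n => ?_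
    calc ∑ m ∈ Finset.range n, (P ^ m) i z * δ z
        ≤ ∑ m ∈ Finset.range n, ∑ a, (P ^ m) i a * δ a :=
          Finset.sum_le_sum fun m _ => Finset.single_le_sum (f := fun a => (P ^ m) i a * δ a)
            (fun a _ => mul_nonneg (hn0 m a) (hδ a)) (Finset.mem_univ z)
      _ ≤ 1 := by
        rw [(sum_range_leak_le hP0 hP1 i n).2]
        linarith [Finset.sum_nonneg fun a (_ : a ∈ Finset.univ) => hn0 n a]
  | @head k d hkd _ ih =>
    rw [← summable_mul_right_iff hkd.ne']
    refine Summable.of_nonneg_of_le (fun n => mul_nonneg (hn0 n k) hkd.le) (fun n => ?_)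
      ((summable_nat_add_iff 1).2 ih)
    rw [pow_succ, Matrix.mul_apply]
    exact Finset.single_le_sum (f := fun k => (P ^ n) i k * P k d)
      (fun k _ => mul_nonneg (hn0 n k) (hP0 k d)) (Finset.mem_univ k)

/-- The Green function solves `G = δ_i + G P`. -/
lemma tsum_pow_eq [DecidableEq N] {P : Matrix N N ℝ} {i : N}
    (hsum : ∀ j, Summable fun n => (P ^ n) i j) (j : N) :
    ∑' n, (P ^ n) i j = (1 : Matrix N N ℝ) i j + ∑ k, (∑' n, (P ^ n) i k) * P k j := by
  rw [(hsum j).tsum_eq_zero_add]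
  simp only [pow_zero, pow_succ, Matrix.mul_apply]
  rw [Summable.tsum_finsetSum fun k _ => (hsum k).mul_right _]
  simp only [tsum_mul_right]

/-- Every unit of mass is eventually lost. -/
lemma sum_tsum_pow_mul_leak [DecidableEq N] {P : Matrix N N ℝ} {δ : N → ℝ}
    (hP1 : ∀ a, ∑ b, P a b = 1 - δ a) {i : N}
    (hsum : ∀ j, Summable fun n => (P ^ n) i j) :
    ∑ k, (∑' n, (P ^ n) i k) * δ k = 1 := by
  have h := Finset.sum_congr rfl fun j (_ : j ∈ Finset.univ) => tsum_pow_eq hsum j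
  rw [Finset.sum_add_distrib, Finset.sum_comm] at h
  simp only [← Finset.mul_sum, hP1, mul_sub, mul_one, Finset.sum_sub_distrib] at h
  simp only [Matrix.one_apply, Finset.sum_ite_eq, Finset.mem_univ, if_true] at h
  linarith

/-! ### The rescaled Green function as `ε → 0` -/

/-- The substochastic matrix `P(ε)` on a closed class: `Q` is the regular part, `C` the internal
ε-coefficients and `t` the full row sums of the ε-coefficients. -/
def leakMat (Q C : Matrix N N ℝ) (t : N → ℝ) (ε : ℝ) : Matrix N N ℝ :=
  Matrix.of fun a b => (1 - ε * t a) * Q a b + ε * C a b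

/-- For small `ε > 0` the Green function `G` of `P(ε)` satisfies
`(ε G) (I - P(ε) + e πᵀ) = ε δ_i + π`, whose matrix tends to an invertible one. -/
lemma green_tendsto [DecidableEq N] {Q C : Matrix N N ℝ} {t e : N → ℝ}
    (hQ0 : ∀ a b, 0 ≤ Q a b) (hQ1 : ∀ a, ∑ b, Q a b = 1)
    (hirr : ∀ a b, Relation.ReflTransGen (fun a b => 0 < Q a b) a b)
    (hC0 : ∀ a b, 0 ≤ C a b) (he0 : ∀ a, 0 ≤ e a) (ht : ∀ a, t a = ∑ b, C a b + e a)
    {z : N} (hz : 0 < e z)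
    {π : N → ℝ} (hπ0 : ∀ a, 0 ≤ π a) (hπ1 : ∑ a, π a = 1)
    (hs : ∀ b, ∑ a, π a * Q a b = π b) (i x : N) :
    (∀ᶠ ε in 𝓝[>] (0 : ℝ), (∀ a b, 0 ≤ leakMat Q C t ε a b) ∧
        ∀ j, Summable fun n => (leakMat Q C t ε ^ n) i j) ∧
      Tendsto (fun ε => ε * ∑' n, (leakMat Q C t ε ^ n) i x) (𝓝[>] (0 : ℝ))
        (𝓝 (π x / ∑ a, π a * e a)) := by
  have hepos : 0 < ∑ a, π a * e a :=
    Finset.sum_pos' (fun a _ => mul_nonneg (hπ0 a) (he0 a))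
      ⟨z, Finset.mem_univ z, mul_pos (stationary_pos hQ0 hirr hπ0 hπ1 hs z) hz⟩
  have hrow : ∀ ε a, ∑ b, leakMat Q C t ε a b = 1 - ε * e a := fun ε a => by
    simp only [leakMat, Matrix.of_apply, Finset.sum_add_distrib, ← Finset.mul_sum, hQ1, ht]
    ring
  have hsmall : ∀ᶠ ε in 𝓝[>] (0 : ℝ), 0 < ε ∧ ∀ a, 0 < 1 - ε * t a := by
    refine (eventually_mem_nhdsWithin (s := Set.Ioi (0 : ℝ))).and (eventually_all.2 fun a => nhdsWithin_le_nhds ?_)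
    have hc : ContinuousAt (fun ε : ℝ => 1 - ε * t a) 0 := by fun_prop
    exact hc.eventually_const_lt (by simp)
  have hgood : ∀ᶠ ε in 𝓝[>] (0 : ℝ), 0 < ε ∧ (∀ a b, 0 ≤ leakMat Q C t ε a b) ∧
      ∀ j, Summable fun n => (leakMat Q C t ε ^ n) i j := by
    filter_upwards [hsmall] with ε ⟨hε, hεt⟩
    have hP0 : ∀ a b, 0 ≤ leakMat Q C t ε a b := fun a b =>
      add_nonneg (mul_nonneg (hεt a).le (hQ0 a b)) (mul_nonneg hε.le (hC0 a b))
    refine ⟨hε, hP0, fun j => summable_pow_apply hP0 (hrow ε)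
      (fun a => mul_nonneg hε.le (he0 a)) (fun a b => ?_) (mul_pos hε hz) i j⟩
    exact Relation.ReflTransGen.mono (fun a b hab =>
      add_pos_of_pos_of_nonneg (mul_pos (hεt a) hab) (mul_nonneg hε.le (hC0 a b))) a b (hirr a b)
  refine ⟨hgood.mono fun ε h => h.2, ?_⟩
  set A : ℝ → Matrix N N ℝ := fun ε => 1 - leakMat Q C t ε + Matrix.vecMulVec e π with hA
  have hAcont : Continuous A := by
    refine continuous_matrix fun a b => ?_
    simp only [hA, leakMat, Matrix.add_apply, Matrix.sub_apply, Matrix.of_apply]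
    fun_prop
  have hA0 : A 0 = 1 - Q + Matrix.vecMulVec e π := by
    have : leakMat Q C t 0 = Q := by ext a b; simp [leakMat]
    simp [hA, this]
  have hdet : (A 0).det ≠ 0 := by
    rw [hA0]
    exact det_ne_zero_of_irreducible hQ0 hQ1 hirr hπ0 hπ1 hs hepos.ne'
  have hvec : ∀ (ε : ℝ) (v : N → ℝ) (b : N), (v ᵥ* A ε) b =
      v b - ∑ a, v a * leakMat Q C t ε a b + (∑ a, v a * e a) * π b :=
    fun ε => vecMul_one_sub_add_apply _ e π
  have hAdet : ∀ᶠ ε in 𝓝[>] (0 : ℝ), (A ε).det ≠ 0 :=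
    nhdsWithin_le_nhds (hAcont.matrix_det.continuousAt.eventually_ne hdet)
  -- the solution of the perturbed system, by Cramer's rule
  have heq : ∀ᶠ ε in 𝓝[>] (0 : ℝ),
      ((A ε).det)⁻¹ * ((fun j => ε * (1 : Matrix N N ℝ) i j + π j) ᵥ* (A ε).adjugate) x =
        ε * ∑' n, (leakMat Q C t ε ^ n) i x := by
    filter_upwards [hgood, hAdet] with ε ⟨hε, _, hsum⟩ hd
    set H : N → ℝ := fun j => ε * ∑' n, (leakMat Q C t ε ^ n) i j with hH
    have hHe : ∑ a, H a * e a = 1 := by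
      rw [← sum_tsum_pow_mul_leak (hrow ε) hsum]
      exact Finset.sum_congr rfl fun a _ => by simp only [hH]; ring
    have hHA : H ᵥ* A ε = fun j => ε * (1 : Matrix N N ℝ) i j + π j := by
      ext j
      rw [hvec, hHe]
      simp only [hH, mul_assoc, ← Finset.mul_sum]
      rw [tsum_pow_eq hsum j]
      ring
    rw [← hHA, Matrix.vecMul_vecMul, Matrix.mul_adjugate, Matrix.vecMul_smul, Matrix.vecMul_one]
    simp [hd, hH]
  refine Tendsto.congr' heq ?_
  have hval : ((A 0).det)⁻¹ *
      ((fun j => (0 : ℝ) * (1 : Matrix N N ℝ) i j + π j) ᵥ* (A 0).adjugate) x =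
        π x / ∑ a, π a * e a := by
    have h0 : ((∑ a, π a * e a)⁻¹ • π) ᵥ* A 0 =
        fun j => (0 : ℝ) * (1 : Matrix N N ℝ) i j + π j := by
      ext j
      rw [Matrix.smul_vecMul, Pi.smul_apply, hvec]
      have : ∀ a, leakMat Q C t 0 a j = Q a j := fun a => by simp [leakMat]
      simp only [this, hs, smul_eq_mul]
      field_simp
      ring
    rw [← h0, Matrix.vecMul_vecMul, Matrix.mul_adjugate, Matrix.vecMul_smul, Matrix.vecMul_one]
    simp only [Pi.smul_apply, smul_eq_mul]
    field_simp
  rw [← hval]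
  have hcont : ContinuousAt (fun ε : ℝ => ((A ε).det)⁻¹ *
      ((fun j => ε * (1 : Matrix N N ℝ) i j + π j) ᵥ* (A ε).adjugate) x) 0 := by
    refine ContinuousAt.mul (hAcont.matrix_det.continuousAt.inv₀ hdet) (Continuous.continuousAt ?_)
    have hadj := hAcont.matrix_adjugate
    simp only [Matrix.vecMul, dotProduct]
    exact continuous_finsetSum _ fun j _ =>
      Continuous.mul (by fun_prop) (hadj.matrix_elem j x)
  exact hcont.tendsto.mono_left nhdsWithin_le_nhds

end Kernel

/-! ### Paths and matrix powers -/

section Paths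

variable {V : Type*} [Fintype V]

/-- The weight of a path, counted only if it runs inside `NP` from `i` to `x`. -/
def insideWeight (M : V → V → ℝ) (NP : Set V) (x i : V) (l : List V) : ℝ :=
  if l.head? = some i ∧ l.getLast? = some x ∧ ∀ v ∈ l, v ∈ NP then pathWeight M l else 0

lemma insideWeight_cons_cons (M : V → V → ℝ) (NP : Set V) (x i a b : V) (l : List V) :
    insideWeight M NP x i (a :: b :: l) =
      if a = i ∧ i ∈ NP then M i b * insideWeight M NP x b (b :: l) else 0 := by
  unfold insideWeight
  by_cases h : a = i
  · subst h
    by_cases ha : a ∈ NP <;> simp [ha, pathWeight]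
  · simp [h]

lemma insideWeight_cons_of_ne (M : V → V → ℝ) (NP : Set V) (x : V) {i b : V} (h : b ≠ i)
    (l : List V) : insideWeight M NP x i (b :: l) = 0 := by
  simp [insideWeight, h]

lemma insideWeight_of_notMem (M : V → V → ℝ) (NP : Set V) (x : V) {i : V} (h : i ∉ NP)
    (l : List V) : insideWeight M NP x i l = 0 := by
  refine if_neg fun hl => h (hl.2.2 i ?_)
  exact List.mem_of_mem_head? hl.1

lemma insideWeight_nonneg {M : V → V → ℝ} {NP : Set V} (hM : ∀ a ∈ NP, ∀ b ∈ NP, 0 ≤ M a b)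
    (x i : V) (l : List V) : 0 ≤ insideWeight M NP x i l := by
  unfold insideWeight
  split_ifs with h
  · refine List.prod_nonneg fun w hw => ?_
    obtain ⟨p, hp, rfl⟩ := List.mem_map.1 hw
    have hp' := List.of_mem_zip (a := p.1) (b := p.2) hp
    exact hM _ (h.2.2 _ hp'.1) _ (h.2.2 _ (List.mem_of_mem_tail hp'.2))
  · exact le_rfl

/-- Prepending a first state to a path. -/
def consVecEquiv (V : Type*) (n : ℕ) : V × List.Vector V n ≃ List.Vector V (n + 1) where
  toFun p := p.1 ::ᵥ p.2
  invFun v := (v.head, v.tail)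
  left_inv p := by simp
  right_inv v := by simp

lemma sum_vector_insideWeight_zero (M : V → V → ℝ) (NP : Set V) (x i : V) :
    ∑ v : List.Vector V 0, insideWeight M NP x i v.1 = 0 := by
  refine Finset.sum_eq_zero fun v _ => ?_
  rw [List.Vector.eq_nil v]
  simp [insideWeight, List.Vector.nil]

/-- The paths with `n` steps inside `NP` add up to the entries of the `n`-th power of the
restricted matrix. -/
lemma sum_vector_insideWeight (M : V → V → ℝ) (NP : Set V) (x : NP) (n : ℕ) (i : NP) :
    ∑ v : List.Vector V (n + 1), insideWeight M NP x i v.1 =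
      ((Matrix.of fun a b : NP => M a b) ^ n) i x := by
  induction n generalizing i with
  | zero =>
    rw [← (consVecEquiv V 0).sum_comp, Fintype.sum_prod_type,
      Finset.sum_eq_single (i : V)]
    · rw [Fintype.sum_eq_single (List.Vector.nil)
        (fun v hv => absurd (List.Vector.eq_nil v) hv)]
      simp [consVecEquiv, insideWeight, List.Vector.cons, List.Vector.nil, pathWeight,
        Matrix.one_apply, Subtype.ext_iff]
    · intro b _ hb
      exact Finset.sum_eq_zero fun v _ => insideWeight_cons_of_ne M NP x hb _
    · simp
  | succ n ih =>
    rw [← (consVecEquiv V (n + 1)).sum_comp, Fintype.sum_prod_type,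
      Finset.sum_eq_single (i : V)]
    · -- split according to the second state of the path
      have h1 : ∀ v : List.Vector V (n + 1),
          insideWeight M NP x i (consVecEquiv V (n + 1) ((i : V), v)).1 =
            ∑ b : V, M i b * insideWeight M NP x b v.1 := by
        rintro ⟨l, hl⟩
        obtain ⟨b, l, rfl⟩ : ∃ b l', l = b :: l' := List.exists_cons_of_length_eq_add_one hl
        rw [Finset.sum_eq_single b]
        · exact (insideWeight_cons_cons M NP x i i b l).trans (if_pos ⟨rfl, i.2⟩)
        · intro d _ hd
          rw [insideWeight_cons_of_ne M NP x hd.symm, mul_zero]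
        · simp
      simp only [h1]
      rw [Finset.sum_comm]
      simp only [← Finset.mul_sum]
      rw [pow_succ', Matrix.mul_apply]
      rw [← Finset.sum_subset (Finset.subset_univ (Finset.univ.filter (· ∈ NP)))]
      · rw [Finset.sum_subtype _ (p := (· ∈ NP)) (by simp)]
        exact Finset.sum_congr rfl fun b _ => by rw [ih b]; rfl
      · intro b _ hb
        rw [Finset.sum_eq_zero fun v _ => insideWeight_of_notMem M NP x (by simpa using hb) _,
          mul_zero]
    · intro b _ hb
      exact Finset.sum_eq_zero fun v _ => insideWeight_cons_of_ne M NP x hb _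
    · simp

/-- The sum over all paths inside `NP` from `i` to `x` is the Green function of the restricted
matrix. -/
lemma hasSum_insideWeight {M : V → V → ℝ} {NP : Set V} (hM : ∀ a ∈ NP, ∀ b ∈ NP, 0 ≤ M a b)
    (i x : NP) (hsum : Summable fun n => ((Matrix.of fun a b : NP => M a b) ^ n) i x) :
    HasSum (insideWeight M NP x i) (∑' n, ((Matrix.of fun a b : NP => M a b) ^ n) i x) := by
  have hfib : ∀ n, HasSum (fun v : List.Vector V n => insideWeight M NP x i v.1)
      (∑ v : List.Vector V n, insideWeight M NP x i v.1) := fun n => hasSum_fintype _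
  have hlen : HasSum (fun n => ∑ v : List.Vector V n, insideWeight M NP x i v.1)
      (∑' n, ((Matrix.of fun a b : NP => M a b) ^ n) i x) := by
    rw [← hasSum_nat_add_iff' 1]
    simp only [sum_vector_insideWeight, Finset.range_one, Finset.sum_singleton,
      sum_vector_insideWeight_zero, sub_zero]
    exact hsum.hasSum
  rw [← (Equiv.sigmaFiberEquiv (List.length (α := V))).hasSum_iff]
  refine HasSum.sigma_of_hasSum hlen hfib ?_
  refine (summable_sigma_of_nonneg fun s => insideWeight_nonneg hM _ _ _).2
    ⟨fun n => (hfib n).summable, ?_⟩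
  refine hlen.summable.congr fun n => ?_
  exact (hfib n).tsum_eq.symm

lemma exitProb_eq {r c : V → V → ℝ} {NP : Set V} {ε : ℝ}
    (hM : ∀ a ∈ NP, ∀ b ∈ NP, 0 ≤ Pmat r c ε a b) (i x : NP) (y : V)
    (hsum : Summable fun n => ((Matrix.of fun a b : NP => Pmat r c ε a b) ^ n) i x) :
    exitProb r c NP i x y ε =
      (∑' n, ((Matrix.of fun a b : NP => Pmat r c ε a b) ^ n) i x) * Pmat r c ε x y := by
  rw [exitProb, tsum_mul_right, ← (hasSum_insideWeight hM i x hsum).tsum_eq]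
  congr 1
  refine (tsum_subtype {l : List V | l.head? = some (i : V) ∧ l.getLast? = some (x : V) ∧
    ∀ v ∈ l, v ∈ NP} (pathWeight (Pmat r c ε))).trans (tsum_congr fun l => ?_)
  simp [Set.indicator, insideWeight]

end Paths

/-- the limiting first-exit probability out of a pseudosink along the
outgoing ε-edge `(x,y)` equals `c x y · π x / Σ_{(x',y') ∈ O} c x' y' · π x'`,
independently of the starting state `i ∈ N_P`. -/
theorem exitProb_tendsto
    {V : Type*} [Fintype V] (r c : V → V → ℝ) (A : Set V)
    (hr0 : ∀ i j, 0 ≤ r i j) (hr1 : ∀ i, ∑ j, r i j = 1)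
    (hc0 : ∀ i j, 0 ≤ c i j)
    (hAr : ∀ i ∈ A, r i i = 1) (hAc : ∀ i ∈ A, ∀ j, c i j = 0)
    (NP : Set V) (hNP : IsPseudosink r c A NP)
    (hQ : ∀ i ∈ NP, ∑ j ∈ Finset.univ.filter (· ∈ NP), r i j = 1)
    (hirr : ∀ x ∈ NP, ∀ y ∈ NP,
      Relation.ReflTransGen (fun a b => a ∈ NP ∧ b ∈ NP ∧ 0 < r a b) x y)
    (π : V → ℝ) (hπ0 : ∀ x, 0 ≤ π x)
    (hπ1 : ∑ x ∈ Finset.univ.filter (· ∈ NP), π x = 1)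
    (hπs : ∀ y ∈ NP, ∑ x ∈ Finset.univ.filter (· ∈ NP), π x * r x y = π y)
    (i : V) (hi : i ∈ NP)
    (x y : V) (hx : x ∈ NP) (hy : y ∉ NP) (hxy : 0 < c x y) :
    Filter.Tendsto (fun ε => exitProb r c NP i x y ε) (𝓝[>] (0:ℝ))
      (𝓝 (c x y * π x /
        ∑ p ∈ Finset.univ.filter (fun p : V × V => p.1 ∈ NP ∧ p.2 ∉ NP ∧ 0 < c p.1 p.2),
          c p.1 p.2 * π p.1)) := by
  have sum_NP : ∀ f : V → ℝ, ∑ a ∈ Finset.univ.filter (· ∈ NP), f a = ∑ a : NP, f a := fun f =>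
    Finset.sum_subtype _ (p := (· ∈ NP)) (by simp) f
  have hr_out : ∀ a ∈ NP, ∀ b, b ∉ NP → r a b = 0 := fun a ha b hb =>
    le_antisymm (not_lt.1 fun h => hb (hNP.2.2.1 a ha b h)) (hr0 a b)
  -- the total rate of leaving `NP` at each state
  set e : NP → ℝ := fun a => ∑ b ∈ Finset.univ.filter (· ∉ NP), c a b with he
  have he0 : ∀ a, 0 ≤ e a := fun a => Finset.sum_nonneg fun b _ => hc0 a b
  have hez : 0 < e ⟨x, hx⟩ :=
    Finset.sum_pos' (fun b _ => hc0 x b) ⟨y, by simpa using hy, hxy⟩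
  have hirr' : ∀ a b : NP, Relation.ReflTransGen (fun a b : NP => 0 < r a b) a b := by
    rintro ⟨a, ha⟩ ⟨b, hb⟩
    induction hirr a ha b hb using Relation.ReflTransGen.head_induction_on with
    | refl => exact .refl
    | head h _ ih => exact .head (b := ⟨_, h.2.1⟩) h.2.2 (ih h.2.1)
  obtain ⟨hev, hlim⟩ := green_tendsto (N := NP) (Q := Matrix.of fun a b : NP => r a b)
    (C := Matrix.of fun a b : NP => c a b) (t := fun a => rowT c a) (e := e)
    (π := fun a => π a)
    (fun a b => hr0 a b) (fun a => (sum_NP (r a)).symm.trans (hQ a a.2)) hirr'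
    (fun a b => hc0 a b) he0
    (fun a => by
      have h := Finset.sum_filter_add_sum_filter_not Finset.univ (· ∈ NP) (c a)
      rw [sum_NP] at h
      exact h.symm)
    hez (fun a => hπ0 a) ((sum_NP π).symm.trans hπ1)
    (fun b => (sum_NP fun a => π a * r a b).symm.trans (hπs b b.2)) ⟨i, hi⟩ ⟨x, hx⟩
  have hden : ∑ p ∈ Finset.univ.filter (fun p : V × V => p.1 ∈ NP ∧ p.2 ∉ NP ∧ 0 < c p.1 p.2),
      c p.1 p.2 * π p.1 = ∑ a : NP, π a * e a := by
    rw [← sum_NP fun a => π a * ∑ b ∈ Finset.univ.filter (· ∉ NP), c a b]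
    simp only [Finset.mul_sum]
    rw [← Finset.sum_product']
    -- pairs with vanishing coefficient contribute nothing
    refine Finset.sum_subset_zero_on_sdiff (fun p hp => ?_) (fun p hp => ?_)
      fun p _ => mul_comm _ _
    · simp only [Finset.mem_filter, Finset.mem_univ, true_and, Finset.mem_product] at hp ⊢
      exact ⟨hp.1, hp.2.1⟩
    · simp only [Finset.mem_sdiff, Finset.mem_filter, Finset.mem_univ, true_and,
        Finset.mem_product, not_and, not_lt] at hp
      rw [le_antisymm (hp.2 hp.1.1 hp.1.2) (hc0 _ _), mul_zero]
  rw [hden, mul_div_assoc]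
  refine (hlim.const_mul (c x y)).congr' ?_
  filter_upwards [hev] with ε ⟨hP0, hsum⟩
  have h := exitProb_eq (r := r) (c := c) (NP := NP) (ε := ε)
    (fun a ha b hb => hP0 ⟨a, ha⟩ ⟨b, hb⟩) ⟨i, hi⟩ ⟨x, hx⟩ y (hsum ⟨x, hx⟩)
  rw [h, show Pmat r c ε x y = ε * c x y by simp [Pmat, hr_out x hx y hy],
    show (Matrix.of fun a b : NP => Pmat r c ε a b) = leakMat (Matrix.of fun a b : NP => r a b)
      (Matrix.of fun a b : NP => c a b) (fun a => rowT c a) ε from rfl]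
  ring

end
end

section
/- Define the collapsed ε-Markov chain on the state space V' = (V \ N_P) ∪ {a}, where a is a new state, by: r' i j = r i j and c' i j = c i j for i, j ∈ V \ N_P; r' i a = Σ_{g ∈ N_P} r i g and c' i a = Σ_{g ∈ N_P} c i g for i ∈ V \ N_P; r' a y = W(N_P, y) and c' a y = 0 for y ∈ V \ N_P. Then for every state i ∈ V \ N_P and every S ⊆ A, the difference of hitting probabilities h_{iS}(ε) − h'_{iS}(ε) tends to 0 as ε → 0⁺, where h' denotes hitting probabilities in the collapsed chain. That is, collapsing a pseudosink does not affect the limiting hitting probabilities. -/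
/-!
Collapsing a pseudosink is harmless because, for small `ε`, the chain equilibrates inside the
pseudosink long before it leaves, so the exit law is almost `W` whatever the entry point. Since
other parts of the chain may also move at ε-rates, a small additive error in the exit law would
not suffice: after many returns to the pseudosink it could accumulate. The proof therefore
controls *relative* errors, in three steps.

* `hitProb_le` and `hitProb_step`: a hitting probability is the minimal nonnegative solution of
  the first-step equations. Every later bound on hitting probabilities comes from exhibiting a
  supersolution.

* `exists_harm_close`: let `f ≥ 0` be harmonic for `P(ε)` on the pseudosink, with stationary
  distribution `p`. Averaging the harmonicity equation against `p` cancels the zeroth-order terms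
  (`balance`), which bounds the outflow `∑ p x * c x y * f y` by a constant times `max f`. Hence
  `f` is an `O(ε * max f)`-perturbation of a harmonic function of the irreducible matrix `Q`, and
  a walk along regular edges from the maximizer gives oscillation `O(ε * max f)`
  (`exists_drop_le`). The balance equation then identifies the almost constant value as
  `∑ W y * f y`, up to a relative error. Applied to `f = ` the probability of exiting at `y`, this
  gives `|E g y - W y| ≤ η * W y`; applied to the escape defect, whose outflow is zero, it gives
  almost sure exit.

* `abs_hitProb_sub_le`: let `u` and `v` be the probabilities of reaching `S`, resp. the
  pseudosink, first among `A` and the pseudosink. In the collapsed chain the value at the new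
  state is the ratio `ρ = ∑ W * u / ∑ W * (1 - v)`, and in the original chain all values on the
  pseudosink lie between `(1 - η) / (1 + η) * ρ` and `(1 + η) / (1 - η) * ρ`, because numerator
  and denominator have nonnegative terms. Off the pseudosink the two hitting probabilities are
  `u + v * (value)`, so they differ by at most `4 * η`.
-/


open Filter Topology
open scoped Classical

noncomputable section

/-- A path from `i` hitting `S`: `i = v₀, …, v_k` with `v_k ∈ S` and `v₀, …, v_{k−1} ∉ A`. -/
def IsHitPath {W : Type*} (A S : Set W) (i : W) (l : List W) : Prop :=
  l.head? = some i ∧ (∃ x ∈ S, l.getLast? = some x) ∧ ∀ p ∈ l.dropLast, p ∉ A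

/-- The hitting probability of `S` from `i`: the sum over all finite paths
`i = v₀, …, v_k` with `v_k ∈ S` and `v₀, …, v_{k−1} ∉ A` of `Π_{m<k} M v_m v_{m+1}`. -/
def hitProb {W : Type*} (M : W → W → ℝ) (A S : Set W) (i : W) : ℝ :=
  ∑' l : {l : List W // IsHitPath A S i l}, pathWeight M l.1

/-- `W(N_P, y) = (Σ_{x : (x,y) ∈ O} c x y · π x) / (Σ_{(x',y') ∈ O} c x' y' · π x')`,
where `O` is the set of outgoing ε-edges of the pseudosink `N_P`. -/
def Wcoll {V : Type*} [Fintype V] (c : V → V → ℝ) (NP : Set V) (π : V → ℝ) (y : V) : ℝ :=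
  (∑ x ∈ Finset.univ.filter (fun x => x ∈ NP ∧ y ∉ NP ∧ 0 < c x y), c x y * π x) /
  (∑ p ∈ Finset.univ.filter (fun p : V × V => p.1 ∈ NP ∧ p.2 ∉ NP ∧ 0 < c p.1 p.2),
    c p.1 p.2 * π p.1)

/-- The state space `V' = (V \ N_P) ∪ {a}` of the collapsed chain: `none` is the new
collapsed state `a`, and `some v` ranges over the states outside `N_P`. -/
abbrev Vc {V : Type*} (NP : Set V) : Type _ := Option {v : V // v ∉ NP}

/-- Regular coefficients of the collapsed chain. -/
def rColl {V : Type*} [Fintype V] (r c : V → V → ℝ) (NP : Set V) (π : V → ℝ) :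
    Vc NP → Vc NP → ℝ
  | some i, some j => r i.1 j.1
  | some i, none => ∑ g ∈ Finset.univ.filter (· ∈ NP), r i.1 g
  | none, some y => Wcoll c NP π y.1
  | none, none => 0

/-- ε-coefficients of the collapsed chain. -/
def cColl {V : Type*} [Fintype V] (c : V → V → ℝ) (NP : Set V) :
    Vc NP → Vc NP → ℝ
  | some i, some j => c i.1 j.1
  | some i, none => ∑ g ∈ Finset.univ.filter (· ∈ NP), c i.1 g
  | none, _ => 0

/-- The image in the collapsed state space of a set `S ⊆ V \ N_P` of original states. -/
def collS {V : Type*} (NP S : Set V) : Set (Vc NP) :=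
  {w | ∃ (v : V) (hv : v ∉ NP), w = some ⟨v, hv⟩ ∧ v ∈ S}

/-! ### Hitting probabilities as minimal solutions -/

theorem pathWeight_cons_cons {W : Type*} (M : W → W → ℝ) (i j : W) (l : List W) :
    pathWeight M (i :: j :: l) = M i j * pathWeight M (j :: l) := by
  simp [pathWeight]

theorem pathWeight_nonneg {W : Type*} {M : W → W → ℝ} (hM : ∀ i j, 0 ≤ M i j) (l : List W) :
    0 ≤ pathWeight M l := by
  apply List.prod_nonneg
  intro a ha
  obtain ⟨p, -, rfl⟩ := List.mem_map.1 ha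
  exact hM _ _

/-- First-step decomposition of a sum over hitting paths: a hitting path from `i ∉ A` is `i`
followed by a hitting path from its second state. -/
theorem tsum_hitPath_step {W : Type*} [Fintype W] {A S : Set W} (hS : S ⊆ A)
    (F : List W → ENNReal) {i : W} (hi : i ∉ A) :
    ∑' l : {l : List W // IsHitPath A S i l}, F l.1
      = ∑ j, ∑' l : {l : List W // IsHitPath A S j l}, F (i :: l.1) := by
  have hcons : ∀ (j : W) (l : List W), IsHitPath A S j l → IsHitPath A S i (i :: l) := by
    rintro j l ⟨h1, ⟨x, hx, h2⟩, h3⟩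
    have hl : l ≠ [] := by rintro rfl; simp at h1
    refine ⟨rfl, ⟨x, hx, ?_⟩, ?_⟩
    · rw [List.getLast?_cons, h2]; rfl
    · rw [List.dropLast_cons_of_ne_nil hl]
      intro p hp
      rcases List.mem_cons.1 hp with rfl | hp
      · exact hi
      · exact h3 p hp
  let φ : (Σ j, {l : List W // IsHitPath A S j l}) → {l : List W // IsHitPath A S i l} :=
    fun q => ⟨i :: q.2.1, hcons q.1 q.2.1 q.2.2⟩
  have hφ : Function.Bijective φ := by
    constructor
    · rintro ⟨j, l, hl⟩ ⟨j', l', hl'⟩ h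
      have h1 : l = l' := by simpa [φ] using h
      subst h1
      have h2 : j = j' := by
        have := hl.1.symm.trans hl'.1
        simpa using this
      subst h2
      rfl
    · rintro ⟨l, hl⟩
      obtain ⟨h1, ⟨x, hx, h2⟩, h3⟩ := hl
      match l, h1, h2, h3 with
      | [], h1, _, _ => simp at h1
      | [k], h1, h2, _ =>
        simp at h1 h2
        subst h1; subst h2
        exact absurd (hS hx) hi
      | k :: j :: l, h1, h2, h3 =>
        simp at h1
        subst h1
        refine ⟨⟨j, j :: l, rfl, ⟨x, hx, ?_⟩, ?_⟩, rfl⟩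
        · simpa [List.getLast?_cons_cons] using h2
        · intro p hp
          apply h3 p
          rw [List.dropLast_cons_of_ne_nil (by simp)]
          exact List.mem_cons_of_mem _ hp
  rw [← (Equiv.ofBijective φ hφ).tsum_eq, ENNReal.tsum_sigma', tsum_fintype]
  rfl

/-- A hitting path from a state of the absorbing set is the one-point path. -/
theorem hitPath_eq_of_mem {W : Type*} {A S : Set W} {i : W} (hi : i ∈ A) {l : List W}
    (hl : IsHitPath A S i l) : l = [i] ∧ i ∈ S := by
  obtain ⟨h1, ⟨x, hx, h2⟩, h3⟩ := hl
  match l, h1, h2, h3 with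
  | [], h1, _, _ => simp at h1
  | [k], h1, h2, _ =>
    simp at h1 h2
    subst h1; subst h2
    exact ⟨rfl, hx⟩
  | k :: j :: l, h1, h2, h3 =>
    simp at h1
    subst h1
    exact absurd hi (h3 k (by simp))

theorem pathWeight_cons_of_hitPath {W : Type*} (M : W → W → ℝ) {A S : Set W} (i : W) {j : W}
    {l : List W} (hl : IsHitPath A S j l) :
    pathWeight M (i :: l) = M i j * pathWeight M l := by
  match l, hl.1 with
  | [], h => simp at h
  | k :: l, h =>
    simp at h
    subst h
    exact pathWeight_cons_cons _ _ _ _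

/-- The extended-nonnegative version of `hitProb`, for which no summability is needed. -/
def eHit {W : Type*} (M : W → W → ℝ) (A S : Set W) (i : W) : ENNReal :=
  ∑' l : {l : List W // IsHitPath A S i l}, ENNReal.ofReal (pathWeight M l.1)

theorem hitProb_eq_toReal {W : Type*} {M : W → W → ℝ} (hM : ∀ i j, 0 ≤ M i j) (A S : Set W)
    (i : W) : hitProb M A S i = (eHit M A S i).toReal := by
  rw [eHit, ENNReal.tsum_toReal_eq (fun _ => ENNReal.ofReal_ne_top)]
  unfold hitProb
  congr 1
  ext l
  rw [ENNReal.toReal_ofReal (pathWeight_nonneg hM _)]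

theorem eHit_step {W : Type*} [Fintype W] {M : W → W → ℝ} (hM : ∀ i j, 0 ≤ M i j)
    {A S : Set W} (hS : S ⊆ A) {i : W} (hi : i ∉ A) :
    eHit M A S i = ∑ j, ENNReal.ofReal (M i j) * eHit M A S j := by
  unfold eHit
  rw [tsum_hitPath_step hS (fun l => ENNReal.ofReal (pathWeight M l)) hi]
  refine Finset.sum_congr rfl fun j _ => ?_
  rw [← ENNReal.tsum_mul_left]
  refine tsum_congr fun l => ?_
  rw [pathWeight_cons_of_hitPath M i l.2, ENNReal.ofReal_mul (hM _ _)]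

/-- Minimality: the sum over paths is below every nonnegative supersolution. Paths are truncated
by length, the bound holds for each truncation by induction, and every finite family of paths
survives some truncation. -/
theorem eHit_le {W : Type*} [Fintype W] {M : W → W → ℝ} (hM : ∀ i j, 0 ≤ M i j)
    {A S : Set W} (hS : S ⊆ A) {f : W → ℝ} (hf0 : ∀ i, 0 ≤ f i) (hfS : ∀ i ∈ S, 1 ≤ f i)
    (hf : ∀ i ∉ A, ∑ j, M i j * f j ≤ f i) (i : W) :
    eHit M A S i ≤ ENNReal.ofReal (f i) := by
  have key : ∀ (n : ℕ) (i : W), ∑' l : {l : List W // IsHitPath A S i l},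
      (if l.1.length ≤ n then ENNReal.ofReal (pathWeight M l.1) else 0)
        ≤ ENNReal.ofReal (f i) := by
    intro n
    induction n with
    | zero =>
      intro i
      have : ∀ l : {l : List W // IsHitPath A S i l},
          (if l.1.length ≤ 0 then ENNReal.ofReal (pathWeight M l.1) else 0) = 0 := by
        rintro ⟨l, hl⟩
        rw [if_neg]
        intro h
        have : l = [] := by simpa using h
        subst this
        simpa using hl.1
      simp only [this, tsum_zero]
      exact bot_le
    | succ n ih =>
      intro i
      by_cases hi : i ∈ A
      · by_cases hiS : i ∈ S
        · have hsub : Subsingleton {l : List W // IsHitPath A S i l} :=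
            ⟨fun a b => Subtype.ext
              ((hitPath_eq_of_mem hi a.2).1.trans (hitPath_eq_of_mem hi b.2).1.symm)⟩
          have hp : IsHitPath A S i [i] := ⟨rfl, ⟨i, hiS, rfl⟩, by simp⟩
          rw [tsum_eq_single (⟨[i], hp⟩ : {l : List W // IsHitPath A S i l})
            (fun b hb => absurd (Subsingleton.elim _ _) hb)]
          simpa [pathWeight] using hfS i hiS
        · have : IsEmpty {l : List W // IsHitPath A S i l} :=
            ⟨fun a => hiS (hitPath_eq_of_mem hi a.2).2⟩
          simp
      · rw [tsum_hitPath_step hS (fun l => if l.length ≤ n + 1 then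
          ENNReal.ofReal (pathWeight M l) else 0) hi]
        calc _ = ∑ j, ENNReal.ofReal (M i j) * ∑' l : {l : List W // IsHitPath A S j l},
              (if l.1.length ≤ n then ENNReal.ofReal (pathWeight M l.1) else 0) := by
              refine Finset.sum_congr rfl fun j _ => ?_
              rw [← ENNReal.tsum_mul_left]
              refine tsum_congr fun l => ?_
              rw [pathWeight_cons_of_hitPath M i l.2, ENNReal.ofReal_mul (hM _ _)]
              simp
          _ ≤ ∑ j, ENNReal.ofReal (M i j) * ENNReal.ofReal (f j) := by
              gcongr with j
              exact ih j
          _ = ENNReal.ofReal (∑ j, M i j * f j) := by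
              rw [ENNReal.ofReal_sum_of_nonneg (fun j _ => mul_nonneg (hM _ _) (hf0 _))]
              exact Finset.sum_congr rfl fun j _ => (ENNReal.ofReal_mul (hM _ _)).symm
          _ ≤ _ := ENNReal.ofReal_le_ofReal (hf i hi)
  unfold eHit
  rw [ENNReal.tsum_eq_iSup_sum]
  refine iSup_le fun s => ?_
  calc _ = ∑ l ∈ s, (if l.1.length ≤ s.sup (fun l => l.1.length) then
        ENNReal.ofReal (pathWeight M l.1) else 0) :=
        Finset.sum_congr rfl fun l hl => by
          rw [if_pos (Finset.le_sup (f := fun l => l.1.length) hl)]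
    _ ≤ _ := (ENNReal.sum_le_tsum s).trans (key _ i)

theorem hitProb_nonneg {W : Type*} {M : W → W → ℝ} (hM : ∀ i j, 0 ≤ M i j) (A S : Set W)
    (i : W) : 0 ≤ hitProb M A S i := by
  rw [hitProb_eq_toReal hM]; exact ENNReal.toReal_nonneg

theorem hitProb_le {W : Type*} [Fintype W] {M : W → W → ℝ} (hM : ∀ i j, 0 ≤ M i j)
    {A S : Set W} (hS : S ⊆ A) {f : W → ℝ} (hf0 : ∀ i, 0 ≤ f i) (hfS : ∀ i ∈ S, 1 ≤ f i)
    (hf : ∀ i ∉ A, ∑ j, M i j * f j ≤ f i) (i : W) : hitProb M A S i ≤ f i := by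
  rw [hitProb_eq_toReal hM]
  exact ENNReal.toReal_le_of_le_ofReal (hf0 i) (eHit_le hM hS hf0 hfS hf i)

theorem hitProb_of_mem {W : Type*} (M : W → W → ℝ) {A S : Set W} (hS : S ⊆ A) {i : W}
    (hi : i ∈ S) : hitProb M A S i = 1 := by
  have hsub : Subsingleton {l : List W // IsHitPath A S i l} :=
    ⟨fun a b => Subtype.ext
      ((hitPath_eq_of_mem (hS hi) a.2).1.trans (hitPath_eq_of_mem (hS hi) b.2).1.symm)⟩
  have hp : IsHitPath A S i [i] := ⟨rfl, ⟨i, hi, rfl⟩, by simp⟩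
  unfold hitProb
  rw [tsum_eq_single (⟨[i], hp⟩ : {l : List W // IsHitPath A S i l})
    (fun b hb => absurd (Subsingleton.elim _ _) hb)]
  simp [pathWeight]

theorem hitProb_of_notMem {W : Type*} (M : W → W → ℝ) {A S : Set W} {i : W}
    (hi : i ∈ A) (hi' : i ∉ S) : hitProb M A S i = 0 := by
  have : IsEmpty {l : List W // IsHitPath A S i l} :=
    ⟨fun a => hi' (hitPath_eq_of_mem hi a.2).2⟩
  simp [hitProb]

theorem hitProb_step {W : Type*} [Fintype W] {M : W → W → ℝ} (hM : ∀ i j, 0 ≤ M i j)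
    (hM1 : ∀ i, ∑ j, M i j = 1) {A S : Set W} (hS : S ⊆ A) {i : W} (hi : i ∉ A) :
    hitProb M A S i = ∑ j, M i j * hitProb M A S j := by
  have hfin : ∀ j, eHit M A S j ≠ ⊤ := fun j =>
    ne_top_of_le_ne_top ENNReal.ofReal_ne_top
      (eHit_le hM hS (f := fun _ => 1) (fun _ => zero_le_one) (fun _ _ => le_rfl)
        (fun i _ => by simp [hM1]) j)
  simp only [hitProb_eq_toReal hM]
  rw [eHit_step hM hS hi, ENNReal.toReal_sum
    (fun j _ => ENNReal.mul_ne_top ENNReal.ofReal_ne_top (hfin j))]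
  refine Finset.sum_congr rfl fun j _ => ?_
  rw [ENNReal.toReal_mul, ENNReal.toReal_ofReal (hM _ _)]

/-- Minimality for a linear combination of hitting probabilities of disjoint targets. The terms
are removed from the supersolution one at a time; the remainder is again a supersolution. -/
theorem sum_hitProb_le {W ι : Type*} [Fintype W] {M : W → W → ℝ} (hM : ∀ i j, 0 ≤ M i j)
    (hM1 : ∀ i, ∑ j, M i j = 1) {A : Set W} (T : ι → Set W) (hT : ∀ k, T k ⊆ A)
    (hd : ∀ k l, k ≠ l → ∀ x ∈ T k, x ∉ T l) (φ : ι → ℝ) (hφ : ∀ k, 0 ≤ φ k) (s : Finset ι) :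
    ∀ f : W → ℝ, (∀ i, 0 ≤ f i) → (∀ k ∈ s, ∀ i ∈ T k, φ k ≤ f i) →
      (∀ i ∉ A, ∑ j, M i j * f j ≤ f i) → ∀ i, ∑ k ∈ s, φ k * hitProb M A (T k) i ≤ f i := by
  induction s using Finset.induction_on with
  | empty => intro f hf0 _ _ i; simpa using hf0 i
  | insert k s hk ih =>
    intro f hf0 hfT hf i
    have h1 : ∀ i, φ k * hitProb M A (T k) i ≤ f i := by
      intro i
      rcases (hφ k).eq_or_lt with h0 | h0
      · rw [← h0]; simpa using hf0 i
      · have := hitProb_le hM (hT k) (f := fun i => f i / φ k)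
          (fun i => div_nonneg (hf0 i) h0.le)
          (fun i hi => by
            rw [le_div_iff₀ h0, one_mul]
            exact hfT k (Finset.mem_insert_self _ _) i hi)
          (fun i hi => by
            simp only [← mul_div_assoc]
            rw [← Finset.sum_div]
            exact div_le_div_of_nonneg_right (hf i hi) h0.le) i
        rw [le_div_iff₀ h0] at this
        linarith
    have h2 := ih (fun i => f i - φ k * hitProb M A (T k) i) (fun i => by linarith [h1 i])
      (fun l hl x hx => by
        have hne : l ≠ k := by rintro rfl; exact hk hl
        rw [hitProb_of_notMem M (hT l hx) (hd l k hne x hx)]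
        simpa using hfT l (Finset.mem_insert_of_mem hl) x hx)
      (fun i hi => by
        have h3 := hitProb_step hM hM1 (hT k) hi
        have h4 := hf i hi
        have h5 : ∑ j, M i j * (f j - φ k * hitProb M A (T k) j)
            = ∑ j, M i j * f j - φ k * ∑ j, M i j * hitProb M A (T k) j := by
          rw [Finset.mul_sum, ← Finset.sum_sub_distrib]
          exact Finset.sum_congr rfl fun j _ => by ring
        rw [h5, ← h3]
        linarith) i
    rw [Finset.sum_insert hk]
    linarith

/-! ### Harmonic functions on a pseudosink are nearly constant -/

/-- `f` is a nonnegative function on `V`, harmonic on `N` for the transition matrix `P(ε)`, where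
`ε > 0` is small enough for `P(ε)` to be stochastic. -/
structure IsHarmOn {V : Type*} [Fintype V] (r c : V → V → ℝ) (N : Set V) (ε : ℝ)
    (f : V → ℝ) : Prop where
  pos : 0 < ε
  small : ∀ i, ε * rowT c i ≤ 1
  nonneg : ∀ i, 0 ≤ f i
  harm : ∀ g ∈ N, f g = ∑ j, Pmat r c ε g j * f j

/-- The `p`-weighted ε-flow out of `N`, tested against `f`. -/
def outFlow {V : Type*} [Fintype V] (c : V → V → ℝ) (N : Set V) (p f : V → ℝ) : ℝ :=
  ∑ g, p g * ∑ j, if j ∈ N then 0 else c g j * f j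

theorem Pmat_sum {V : Type*} [Fintype V] (r c : V → V → ℝ) (ε : ℝ) (g : V) (f : V → ℝ) :
    ∑ j, Pmat r c ε g j * f j
      = (1 - ε * rowT c g) * ∑ j, r g j * f j + ε * ∑ j, c g j * f j := by
  rw [Finset.mul_sum, Finset.mul_sum, ← Finset.sum_add_distrib]
  exact Finset.sum_congr rfl fun j _ => by unfold Pmat; ring

theorem sum_split_mem {V : Type*} [Fintype V] (N : Set V) (a : V → ℝ) :
    ∑ j, a j = ∑ j, (if j ∈ N then a j else 0) + ∑ j, (if j ∈ N then 0 else a j) := by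
  rw [← Finset.sum_add_distrib]
  exact Finset.sum_congr rfl fun j _ => by split_ifs <;> simp

theorem rowT_nonneg {V : Type*} [Fintype V] {c : V → V → ℝ} (hc0 : ∀ i j, 0 ≤ c i j) (i : V) :
    0 ≤ rowT c i := Finset.sum_nonneg fun j _ => hc0 i j

section core

variable {V : Type*} [Fintype V] {r c : V → V → ℝ} {N : Set V} {p : V → ℝ}

/-- The mass balance obtained by averaging the harmonicity equation over the stationary
distribution: the zeroth-order terms cancel. -/
theorem balance (hp0 : ∀ x ∉ N, p x = 0) (hps : ∀ j, ∑ g, p g * r g j = p j)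
    {ε : ℝ} {f : V → ℝ} (hf : IsHarmOn r c N ε f) :
    ∑ g, p g * (rowT c g * ∑ j, r g j * f j)
      = ∑ g, p g * (∑ j, if j ∈ N then c g j * f j else 0) + outFlow c N p f := by
  have h1 : ∑ g, p g * f g = ∑ g, p g * ∑ j, r g j * f j := by
    simp only [Finset.mul_sum]
    rw [Finset.sum_comm]
    refine Finset.sum_congr rfl fun j _ => ?_
    rw [← hps j, Finset.sum_mul]
    exact Finset.sum_congr rfl fun g _ => by ring
  have h2 : ∑ g, p g * f g = ∑ g, p g * ∑ j, r g j * f j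
      - ε * ∑ g, p g * (rowT c g * ∑ j, r g j * f j) + ε * ∑ g, p g * ∑ j, c g j * f j := by
    rw [Finset.mul_sum, Finset.mul_sum, ← Finset.sum_sub_distrib, ← Finset.sum_add_distrib]
    refine Finset.sum_congr rfl fun g _ => ?_
    by_cases hg : g ∈ N
    · rw [hf.harm g hg, Pmat_sum]; ring
    · simp [hp0 g hg]
  have h3 : ε * (∑ g, p g * (rowT c g * ∑ j, r g j * f j) - ∑ g, p g * ∑ j, c g j * f j) = 0 := by
    linarith
  have h4 := (mul_eq_zero.1 h3).resolve_left hf.pos.ne'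
  rw [outFlow, ← Finset.sum_add_distrib, sub_eq_zero.1 h4]
  refine Finset.sum_congr rfl fun g _ => ?_
  rw [← mul_add, ← sum_split_mem]

theorem sum_r_le (hr0 : ∀ i j, 0 ≤ r i j) (hr1 : ∀ i, ∑ j, r i j = 1)
    (hN : ∀ g ∈ N, ∀ j ∉ N, r g j = 0) {f : V → ℝ} {m : ℝ} (hm : ∀ x ∈ N, f x ≤ m) {g : V}
    (hg : g ∈ N) : ∑ j, r g j * f j ≤ m := by
  calc ∑ j, r g j * f j ≤ ∑ j, r g j * m := by
        refine Finset.sum_le_sum fun j _ => ?_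
        by_cases hj : j ∈ N
        · exact mul_le_mul_of_nonneg_left (hm j hj) (hr0 _ _)
        · simp [hN g hg j hj]
    _ = m := by rw [← Finset.sum_mul, hr1, one_mul]

theorem le_sum_r (hr0 : ∀ i j, 0 ≤ r i j) (hr1 : ∀ i, ∑ j, r i j = 1)
    (hN : ∀ g ∈ N, ∀ j ∉ N, r g j = 0) {f : V → ℝ} {m : ℝ} (hm : ∀ x ∈ N, m ≤ f x) {g : V}
    (hg : g ∈ N) : m ≤ ∑ j, r g j * f j := by
  have := sum_r_le hr0 hr1 hN (f := fun x => - f x) (m := -m)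
    (fun x hx => neg_le_neg (hm x hx)) hg
  simp only [mul_neg, Finset.sum_neg_distrib] at this
  linarith

theorem sum_cN_le (hc0 : ∀ i j, 0 ≤ c i j) {f : V → ℝ} {m : ℝ} (hm0 : 0 ≤ m)
    (hm : ∀ x ∈ N, f x ≤ m) (g : V) :
    ∑ j, (if j ∈ N then c g j * f j else 0) ≤ rowT c g * m := by
  rw [rowT, Finset.sum_mul]
  refine Finset.sum_le_sum fun j _ => ?_
  split_ifs with hj
  · exact mul_le_mul_of_nonneg_left (hm j hj) (hc0 _ _)
  · exact mul_nonneg (hc0 _ _) hm0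

/-- The drop of a harmonic function from its maximum on `N` is `O(ε)` relative to the maximum,
with a constant that depends only on the two states. It propagates along a path of regular edges
from the maximizer: the ε-perturbation, including the a priori unbounded values outside `N`,
is controlled by the mass balance. -/
theorem exists_drop_le (hr0 : ∀ i j, 0 ≤ r i j) (hr1 : ∀ i, ∑ j, r i j = 1)
    (hc0 : ∀ i j, 0 ≤ c i j) (hN : ∀ g ∈ N, ∀ j ∉ N, r g j = 0)
    (hirr : ∀ x ∈ N, ∀ y ∈ N,
      Relation.ReflTransGen (fun a b => a ∈ N ∧ b ∈ N ∧ 0 < r a b) x y)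
    (hp0 : ∀ x ∉ N, p x = 0) (hpp : ∀ x ∈ N, 0 < p x) (hps : ∀ j, ∑ g, p g * r g j = p j)
    {g₀ g : V} (hg₀ : g₀ ∈ N) (hg : g ∈ N) :
    ∃ K, 0 ≤ K ∧ ∀ ε f, IsHarmOn r c N ε f → (∀ x ∈ N, f x ≤ f g₀) →
      f g₀ - f g ≤ K * ε * f g₀ := by
  have hp : ∀ x, 0 ≤ p x := fun x => by
    by_cases hx : x ∈ N
    · exact (hpp x hx).le
    · exact (hp0 x hx).ge
  induction hirr g₀ hg₀ g hg with
  | refl => exact ⟨0, le_rfl, fun ε f _ _ => by simp⟩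
  | @tail a b _ hab ih =>
    obtain ⟨ha, hb, hrab⟩ := hab
    obtain ⟨K, hK0, hK⟩ := ih ha
    set T := ∑ g, p g * rowT c g with hT
    have hT0 : 0 ≤ T := Finset.sum_nonneg fun g _ => mul_nonneg (hp g) (rowT_nonneg hc0 g)
    refine ⟨(K + (rowT c a + T / p a)) / r a b, div_nonneg (add_nonneg hK0 (add_nonneg
      (rowT_nonneg hc0 a) (div_nonneg hT0 (hp a)))) hrab.le, fun ε f hf hmax => ?_⟩
    have h1 := hK ε f hf hmax
    set m := f g₀
    have hm0 : 0 ≤ m := hf.nonneg g₀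
    have hε := hf.pos
    have hout : outFlow c N p f ≤ T * m := by
      have h2 := balance hp0 hps hf
      have h3 : ∑ g, p g * (rowT c g * ∑ j, r g j * f j) ≤ T * m := by
        rw [hT, Finset.sum_mul]
        refine Finset.sum_le_sum fun g _ => ?_
        by_cases hg : g ∈ N
        · rw [mul_assoc]
          exact mul_le_mul_of_nonneg_left (mul_le_mul_of_nonneg_left
            (sum_r_le hr0 hr1 hN hmax hg) (rowT_nonneg hc0 g)) (hp g)
        · simp [hp0 g hg]
      have h4 : 0 ≤ ∑ g, p g * (∑ j, if j ∈ N then c g j * f j else 0) :=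
        Finset.sum_nonneg fun g _ => mul_nonneg (hp g) (Finset.sum_nonneg fun j _ => by
          split_ifs
          · exact mul_nonneg (hc0 _ _) (hf.nonneg _)
          · exact le_rfl)
      linarith
    have houta : ∑ j, (if j ∈ N then 0 else c a j * f j) ≤ T / p a * m := by
      have h2 : p a * ∑ j, (if j ∈ N then 0 else c a j * f j) ≤ outFlow c N p f :=
        Finset.single_le_sum (f := fun g => p g * ∑ j, (if j ∈ N then 0 else c g j * f j))
          (fun g _ => mul_nonneg (hp g) (Finset.sum_nonneg fun j _ => by
            split_ifs
            · exact le_rfl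
            · exact mul_nonneg (hc0 _ _) (hf.nonneg _))) (Finset.mem_univ a)
      rw [div_mul_eq_mul_div, le_div_iff₀ (hpp a ha)]
      linarith
    have hrf0 : 0 ≤ ∑ j, r a j * f j :=
      Finset.sum_nonneg fun j _ => mul_nonneg (hr0 _ _) (hf.nonneg _)
    have hfa : f a ≤ ∑ j, r a j * f j + ε * ((rowT c a + T / p a) * m) := by
      rw [hf.harm a ha, Pmat_sum, sum_split_mem N (fun j => c a j * f j)]
      have h2 := sum_cN_le hc0 hm0 hmax a
      have h3 : 0 ≤ ε * rowT c a * ∑ j, r a j * f j :=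
        mul_nonneg (mul_nonneg hε.le (rowT_nonneg hc0 a)) hrf0
      have h4 := mul_le_mul_of_nonneg_left (add_le_add h2 houta) hε.le
      linarith
    have hrb : r a b * (m - f b) ≤ m - ∑ j, r a j * f j := by
      have h2 : m - ∑ j, r a j * f j = ∑ j, r a j * (m - f j) := by
        simp only [mul_sub, Finset.sum_sub_distrib]
        rw [← Finset.sum_mul, hr1, one_mul]
      rw [h2]
      refine Finset.single_le_sum (f := fun j => r a j * (m - f j)) (fun j _ => ?_)
        (Finset.mem_univ b)
      by_cases hj : j ∈ N
      · exact mul_nonneg (hr0 _ _) (sub_nonneg.2 (hmax j hj))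
      · simp [hN a ha j hj]
    have h5 : m - f b ≤ (K * ε * m + ε * ((rowT c a + T / p a) * m)) / r a b := by
      rw [le_div_iff₀ hrab]
      linarith
    refine h5.trans (le_of_eq ?_)
    ring

/-- A harmonic function is within a relative error `η` of its outflow average on all of `N`, once
`ε` is small, uniformly in the function. -/
theorem exists_harm_close (hr0 : ∀ i j, 0 ≤ r i j) (hr1 : ∀ i, ∑ j, r i j = 1)
    (hc0 : ∀ i j, 0 ≤ c i j) (hN : ∀ g ∈ N, ∀ j ∉ N, r g j = 0)
    (hirr : ∀ x ∈ N, ∀ y ∈ N,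
      Relation.ReflTransGen (fun a b => a ∈ N ∧ b ∈ N ∧ 0 < r a b) x y)
    (hp0 : ∀ x ∉ N, p x = 0) (hpp : ∀ x ∈ N, 0 < p x) (hps : ∀ j, ∑ g, p g * r g j = p j)
    (hD : 0 < outFlow c N p 1) {η : ℝ} (hη : 0 < η) (hη1 : η ≤ 1) :
    ∃ ε₀ > 0, ∀ ε f, ε < ε₀ → IsHarmOn r c N ε f → ∀ g ∈ N,
      |f g * outFlow c N p 1 - outFlow c N p f| ≤ η * outFlow c N p f := by
  have hp : ∀ x, 0 ≤ p x := fun x => by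
    by_cases hx : x ∈ N
    · exact (hpp x hx).le
    · exact (hp0 x hx).ge
  have hK : ∀ a b, ∃ K, 0 ≤ K ∧ (a ∈ N → b ∈ N → ∀ ε f, IsHarmOn r c N ε f →
      (∀ x ∈ N, f x ≤ f a) → f a - f b ≤ K * ε * f a) := by
    intro a b
    by_cases ha : a ∈ N
    · by_cases hb : b ∈ N
      · obtain ⟨K, h0, h1⟩ := exists_drop_le hr0 hr1 hc0 hN hirr hp0 hpp hps ha hb
        exact ⟨K, h0, fun _ _ => h1⟩
      · exact ⟨0, le_rfl, fun _ h => absurd h hb⟩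
    · exact ⟨0, le_rfl, fun h => absurd h ha⟩
  choose k hk0 hk using hK
  set K := ∑ a, ∑ b, k a b with hKdef
  have hkK : ∀ a b, k a b ≤ K := fun a b =>
    (Finset.single_le_sum (f := fun b => k a b) (fun b _ => hk0 a b) (Finset.mem_univ b)).trans
      (Finset.single_le_sum (f := fun a => ∑ b, k a b)
        (fun a _ => Finset.sum_nonneg fun b _ => hk0 a b) (Finset.mem_univ a))
  have hK0 : 0 ≤ K := Finset.sum_nonneg fun a _ => Finset.sum_nonneg fun b _ => hk0 a b
  set D := outFlow c N p 1 with hDdef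
  set T := ∑ g, p g * rowT c g with hT
  have hT0 : 0 ≤ T := Finset.sum_nonneg fun g _ => mul_nonneg (hp g) (rowT_nonneg hc0 g)
  set C := K * (D + T) with hC
  have hC0 : 0 ≤ C := mul_nonneg hK0 (by linarith)
  refine ⟨η * D / (2 * (C + 1)), by positivity, fun ε f hε hf g hg => ?_⟩
  obtain ⟨g₀, hg₀, hmax⟩ := Set.exists_max_image N f (Set.toFinite N) ⟨g, hg⟩
  set m := f g₀ with hm
  have hm0 : 0 ≤ m := hf.nonneg g₀
  have hε0 := hf.pos
  have hdrop : ∀ x ∈ N, m - K * ε * m ≤ f x := fun x hx => by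
    have h1 := hk g₀ x hg₀ hx ε f hf hmax
    have h2 : k g₀ x * ε * m ≤ K * ε * m := by
      have := hkK g₀ x
      gcongr
    linarith
  have hδ0 : 0 ≤ K * ε * m := by positivity
  have hDT : D = T - ∑ g, p g * ∑ j, (if j ∈ N then c g j else 0) := by
    rw [hDdef, outFlow, hT, ← Finset.sum_sub_distrib]
    refine Finset.sum_congr rfl fun g _ => ?_
    rw [rowT, sum_split_mem N (fun j => c g j)]
    simp only [Pi.one_apply, mul_one]
    ring
  have hmD : m * D - outFlow c N p f
      = ∑ g, p g * (rowT c g * (m - ∑ j, r g j * f j))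
        - ∑ g, p g * ∑ j, (if j ∈ N then c g j * (m - f j) else 0) := by
    have h1 := balance hp0 hps hf
    have h2 : ∑ g, p g * (rowT c g * (m - ∑ j, r g j * f j))
        = m * T - ∑ g, p g * (rowT c g * ∑ j, r g j * f j) := by
      rw [hT, Finset.mul_sum, ← Finset.sum_sub_distrib]
      exact Finset.sum_congr rfl fun g _ => by ring
    have h3 : ∑ g, p g * ∑ j, (if j ∈ N then c g j * (m - f j) else 0)
        = m * ∑ g, p g * ∑ j, (if j ∈ N then c g j else 0)
          - ∑ g, p g * ∑ j, (if j ∈ N then c g j * f j else 0) := by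
      simp only [Finset.mul_sum]
      rw [← Finset.sum_sub_distrib]
      refine Finset.sum_congr rfl fun g _ => ?_
      rw [← Finset.sum_sub_distrib]
      refine Finset.sum_congr rfl fun j _ => ?_
      split_ifs <;> ring
    rw [h2, h3, hDT]
    linarith
  have hX0 : 0 ≤ ∑ g, p g * (rowT c g * (m - ∑ j, r g j * f j)) :=
    Finset.sum_nonneg fun x _ => by
      by_cases hx : x ∈ N
      · exact mul_nonneg (hp x) (mul_nonneg (rowT_nonneg hc0 x)
          (sub_nonneg.2 (sum_r_le hr0 hr1 hN hmax hx)))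
      · simp [hp0 x hx]
  have hX1 : ∑ g, p g * (rowT c g * (m - ∑ j, r g j * f j)) ≤ T * (K * ε * m) := by
    rw [hT, Finset.sum_mul]
    refine Finset.sum_le_sum fun x _ => ?_
    by_cases hx : x ∈ N
    · rw [mul_assoc]
      have := le_sum_r hr0 hr1 hN hdrop hx
      exact mul_le_mul_of_nonneg_left (mul_le_mul_of_nonneg_left
        (by linarith) (rowT_nonneg hc0 x)) (hp x)
    · simp [hp0 x hx]
  have hY0 : 0 ≤ ∑ g, p g * ∑ j, (if j ∈ N then c g j * (m - f j) else 0) :=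
    Finset.sum_nonneg fun x _ => mul_nonneg (hp x) (Finset.sum_nonneg fun j _ => by
      split_ifs with hj
      · exact mul_nonneg (hc0 _ _) (sub_nonneg.2 (hmax j hj))
      · exact le_rfl)
  have hY1 : ∑ g, p g * ∑ j, (if j ∈ N then c g j * (m - f j) else 0) ≤ T * (K * ε * m) := by
    rw [hT, Finset.sum_mul]
    refine Finset.sum_le_sum fun x _ => ?_
    rw [mul_assoc]
    exact mul_le_mul_of_nonneg_left (sum_cN_le (f := fun j => m - f j) hc0 hδ0
      (fun y hy => by linarith [hdrop y hy]) x) (hp x)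
  have hCε : C * ε ≤ η * D / 2 := by
    have h1 : ε * (2 * (C + 1)) < η * D := (lt_div_iff₀ (by positivity)).1 hε
    nlinarith
  have hCεm : C * ε * m ≤ η * D / 2 * m := mul_le_mul_of_nonneg_right hCε hm0
  have hTC : T * (K * ε * m) + D * (K * ε * m) = C * ε * m := by rw [hC]; ring
  have hDK : 0 ≤ D * (K * ε * m) := mul_nonneg hD.le hδ0
  have hmw : m * D ≤ 2 * outFlow c N p f := by
    have : η * D / 2 * m ≤ m * D / 2 := by
      have : 0 ≤ (1 - η) * (D * m) := mul_nonneg (by linarith) (by positivity)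
      linarith
    linarith
  have h6 : η * D / 2 * m ≤ η * outFlow c N p f := by
    have := mul_le_mul_of_nonneg_left hmw hη.le
    linarith
  have h7 : (m - f g) * D ≤ D * (K * ε * m) := by
    have := mul_le_mul_of_nonneg_right (by linarith [hdrop g hg] : m - f g ≤ K * ε * m) hD.le
    linarith
  have h8 : 0 ≤ (m - f g) * D := mul_nonneg (sub_nonneg.2 (hmax g hg)) hD.le
  rw [abs_le]
  constructor <;> linarith

end core

/-! ### Comparing the original and the collapsed chain for a fixed `ε` -/

theorem sum_Vc {V : Type*} [Fintype V] {N : Set V} (a : Vc N → ℝ) :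
    ∑ w, a w = a none + ∑ v, if h : v ∈ N then 0 else a (some ⟨v, h⟩) := by
  rw [Fintype.sum_option]
  congr 1
  have h1 : ∀ v : {v : V // v ∉ N}, a (some v) = if h : v.1 ∈ N then 0 else a (some ⟨v.1, h⟩) :=
    fun v => by rw [dif_neg v.2]
  rw [Finset.sum_congr rfl fun v _ => h1 v,
    ← Finset.sum_subtype (Finset.univ.filter (fun v => v ∉ N)) (by simp)
      (fun v => if h : v ∈ N then (0 : ℝ) else a (some ⟨v, h⟩))]
  refine Finset.sum_subset (Finset.subset_univ _) fun v _ hv => ?_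
  rw [dif_pos (by simpa using hv)]

section compare

variable {V : Type*} [Fintype V] {P : V → V → ℝ} {A N S : Set V}

theorem add_hitProb_le (hP : ∀ i j, 0 ≤ P i j) (hP1 : ∀ i, ∑ j, P i j = 1)
    (hAN : ∀ x ∈ N, x ∉ A) (hS : S ⊆ A) {K : ℝ} (hK : 0 ≤ K) {f : V → ℝ}
    (hf0 : ∀ i, 0 ≤ f i) (hfS : ∀ i ∈ S, 1 ≤ f i) (hfN : ∀ i ∈ N, K ≤ f i)
    (hf : ∀ i ∉ A, i ∉ N → ∑ j, P i j * f j ≤ f i) (i : V) :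
    hitProb P (A ∪ N) S i + K * hitProb P (A ∪ N) N i ≤ f i := by
  have := sum_hitProb_le (ι := Bool) hP hP1 (A := A ∪ N) (fun b => if b then S else N)
    (by
      rintro (_ | _)
      · simp
      · simpa using hS.trans Set.subset_union_left)
    (by
      rintro (_ | _) (_ | _) h x hx
      · exact absurd rfl h
      · simp at hx ⊢
        exact fun h => hAN x hx (hS h)
      · simp at hx ⊢
        exact fun h => hAN x h (hS hx)
      · exact absurd rfl h)
    (fun b => if b then 1 else K) (by rintro (_ | _) <;> simp [hK]) Finset.univ f hf0
    (by rintro (_ | _) _ <;> simpa) (fun i hi => by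
      rw [Set.mem_union, not_or] at hi
      exact hf i hi.1 hi.2) i
  simpa using this

/-- If every exit distribution from `N` is within relative error `η` of `W`, then collapsing `N`
to one state with exit distribution `W` changes hitting probabilities by at most `4 * η`.
With `u` and `v` the probabilities of reaching `S` before `N`, resp. `N` before `A`, the value at
the collapsed state is the ratio `∑ W * u / ∑ W * (1 - v)`. Both sums have nonnegative terms, so
a relative error in `W` results in a relative error of the ratio, even if the denominator is
tiny. -/
theorem abs_hitProb_sub_le (hP : ∀ i j, 0 ≤ P i j) (hP1 : ∀ i, ∑ j, P i j = 1)
    (hAN : ∀ x ∈ N, x ∉ A) (hS : S ⊆ A) (hNne : N.Nonempty)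
    {W : V → ℝ} (hW0 : ∀ y, 0 ≤ W y) (hWN : ∀ y ∈ N, W y = 0) (hW1 : ∑ y, W y = 1)
    {η : ℝ} (hη0 : 0 < η) (hη : η ≤ 1 / 2)
    {E : V → V → ℝ} (hEN : ∀ g, ∀ y ∈ N, E g y = 0)
    (hEd : ∀ g, ∀ y ∉ N, E g y = hitProb P Nᶜ {y} g)
    (hE : ∀ g ∈ N, ∀ y, |E g y - W y| ≤ η * W y) (hE1 : ∀ g ∈ N, ∑ y, E g y = 1)
    {P' : Vc N → Vc N → ℝ} (h00 : P' none none = 0) (h01 : ∀ y, P' none (some y) = W y.1)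
    (h10 : ∀ i, P' (some i) none = ∑ g, if g ∈ N then P i.1 g else 0)
    (h11 : ∀ i j, P' (some i) (some j) = P i.1 j.1) (i : V) (hi : i ∉ N) :
    |hitProb P A S i - hitProb P' (collS N A) (collS N S) (some ⟨i, hi⟩)| ≤ 4 * η := by
  set u := hitProb P (A ∪ N) S with hu
  set v := hitProb P (A ∪ N) N with hv
  have hSB : S ⊆ A ∪ N := hS.trans Set.subset_union_left
  have hNB : N ⊆ A ∪ N := Set.subset_union_right
  have hu0 : ∀ i, 0 ≤ u i := hitProb_nonneg hP _ _
  have hv0 : ∀ i, 0 ≤ v i := hitProb_nonneg hP _ _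
  have huv : ∀ i, u i ≤ 1 - v i := fun i => by
    have := add_hitProb_le hP hP1 hAN hS zero_le_one (f := fun _ => 1) (fun _ => zero_le_one)
      (fun _ _ => le_rfl) (fun _ _ => le_rfl) (fun i _ _ => by simp [hP1]) i
    linarith
  have hv1 : ∀ i, 0 ≤ 1 - v i := fun i => (hu0 i).trans (huv i)
  have huN : ∀ i ∈ N, u i = 0 := fun i hi =>
    hitProb_of_notMem P (hNB hi) fun h => hAN i hi (hS h)
  have hvN : ∀ i ∈ N, v i = 1 := fun i hi => hitProb_of_mem P hNB hi
  have hustep : ∀ i ∉ A, i ∉ N → u i = ∑ j, P i j * u j := fun i h1 h2 =>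
    hitProb_step hP hP1 hSB (by simp [h1, h2])
  have hvstep : ∀ i ∉ A, i ∉ N → v i = ∑ j, P i j * v j := fun i h1 h2 =>
    hitProb_step hP hP1 hNB (by simp [h1, h2])
  have huvstep : ∀ K : ℝ, ∀ i ∉ A, i ∉ N → ∑ j, P i j * (u j + K * v j) = u i + K * v i := by
    intro K i h1 h2
    rw [hustep i h1 h2, hvstep i h1 h2, Finset.mul_sum, ← Finset.sum_add_distrib]
    exact Finset.sum_congr rfl fun j _ => by ring
  have huS : ∀ i ∈ S, u i = 1 := fun i hi => hitProb_of_mem P hSB hi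
  -- The value at the collapsed state; when `Z = 0`, the junk value `ρ = 0` is the correct one.
  set U := ∑ y, W y * u y with hU
  set Z := ∑ y, W y * (1 - v y) with hZ
  set ρ := U / Z with hρ
  have hU0 : 0 ≤ U := Finset.sum_nonneg fun y _ => mul_nonneg (hW0 y) (hu0 y)
  have hUZ : U ≤ Z := Finset.sum_le_sum fun y _ => mul_le_mul_of_nonneg_left (huv y) (hW0 y)
  have hZ0 : 0 ≤ Z := hU0.trans hUZ
  have hρ0 : 0 ≤ ρ := div_nonneg hU0 hZ0
  have hρ1 : ρ ≤ 1 := div_le_one_of_le₀ hUZ hZ0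
  have hρZ : U = ρ * Z := by
    rcases hZ0.eq_or_lt with h | h
    · rw [← h, mul_zero]; linarith
    · rw [hρ, div_mul_cancel₀ _ h.ne']
  have hdivZ : ∀ a b : ℝ, 0 ≤ b → a * U ≤ b * Z → a * ρ ≤ b := by
    intro a b hb hab
    rcases hZ0.eq_or_lt with h | h
    · rw [hρ, ← h, div_zero, mul_zero]; exact hb
    · rw [hρ, ← mul_div_assoc, div_le_iff₀ h]; exact hab
  have hWv : ∑ y, W y * v y = 1 - Z := by
    simp only [hZ, mul_sub, mul_one, Finset.sum_sub_distrib, hW1]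
    ring
  have hWuv : ∀ K : ℝ, ∑ y, W y * (u y + K * v y) = U + K * (1 - Z) := by
    intro K
    rw [← hWv, hU, Finset.mul_sum, ← Finset.sum_add_distrib]
    exact Finset.sum_congr rfl fun y _ => by ring
  have hE0 : ∀ g y, 0 ≤ E g y := fun g y => by
    by_cases hy : y ∈ N
    · rw [hEN g y hy]
    · rw [hEd g y hy]; exact hitProb_nonneg hP _ _ _
  have hEle : ∀ g ∈ N, ∀ φ : V → ℝ, (∀ y, 0 ≤ φ y) →
      ∑ y, E g y * φ y ≤ (1 + η) * ∑ y, W y * φ y := by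
    intro g hg φ hφ
    rw [Finset.mul_sum]
    refine Finset.sum_le_sum fun y _ => ?_
    rw [← mul_assoc]
    exact mul_le_mul_of_nonneg_right (by linarith [(abs_le.1 (hE g hg y)).2]) (hφ y)
  have hleE : ∀ g ∈ N, ∀ φ : V → ℝ, (∀ y, 0 ≤ φ y) →
      (1 - η) * ∑ y, W y * φ y ≤ ∑ y, E g y * φ y := by
    intro g hg φ hφ
    rw [Finset.mul_sum]
    refine Finset.sum_le_sum fun y _ => ?_
    rw [← mul_assoc]
    exact mul_le_mul_of_nonneg_right (by linarith [(abs_le.1 (hE g hg y)).1]) (hφ y)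
  have hEuv : ∀ g ∈ N, ∀ K : ℝ, ∑ y, E g y * (u y + K * v y)
      = ∑ y, E g y * u y + K * (1 - ∑ y, E g y * (1 - v y)) := by
    intro g hg K
    have h1 : ∑ y, E g y * v y = 1 - ∑ y, E g y * (1 - v y) := by
      simp only [mul_sub, mul_one, Finset.sum_sub_distrib, hE1 g hg]
      ring
    rw [← h1, Finset.mul_sum, ← Finset.sum_add_distrib]
    exact Finset.sum_congr rfl fun y _ => by ring
  -- Lower bound for the original chain.
  set h := hitProb P A S with hh
  have hh0 : ∀ i, 0 ≤ h i := hitProb_nonneg hP _ _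
  obtain ⟨g₀, hg₀, hmin⟩ := Set.exists_min_image N h (Set.toFinite N) hNne
  have hlow : ∀ i, u i + h g₀ * v i ≤ h i :=
    add_hitProb_le hP hP1 hAN hS (hh0 g₀) hh0 (fun i hi => (hitProb_of_mem P hS hi).ge) hmin
      (fun i hi _ => (hitProb_step hP hP1 hS hi).ge)
  have hEh : ∑ y, E g₀ y * h y ≤ h g₀ := by
    have := sum_hitProb_le hP hP1 (A := Nᶜ) (fun y : {y // y ∉ N} => {y.1})
      (fun y => by simp)
      (fun k l hkl x hx hx' => hkl (Subtype.ext (hx.symm.trans hx')))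
      (fun y => h y.1) (fun y => hh0 _) Finset.univ h hh0
      (fun k _ i hi => by rw [Set.mem_singleton_iff.1 hi])
      (fun i hi => (hitProb_step hP hP1 hS (hAN i (not_not.1 hi))).ge) g₀
    refine le_trans (le_of_eq ?_) this
    have h2 := sum_Vc (N := N) (fun w => w.elim 0 fun y => h y.1 * hitProb P Nᶜ {y.1} g₀)
    rw [Fintype.sum_option] at h2
    simp only [Option.elim_none, Option.elim_some, zero_add] at h2
    rw [h2]
    refine Finset.sum_congr rfl fun y _ => ?_
    split_ifs with hy
    · rw [hEN _ _ hy, zero_mul]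
    · rw [hEd _ _ hy, mul_comm]
  have hm : (1 - η) * ρ ≤ (1 + η) * h g₀ := by
    have h1 : ∑ y, E g₀ y * (u y + h g₀ * v y) ≤ h g₀ :=
      (Finset.sum_le_sum fun y _ => mul_le_mul_of_nonneg_left (hlow y) (hE0 _ _)).trans hEh
    rw [hEuv g₀ hg₀] at h1
    have h2 := hleE g₀ hg₀ u hu0
    have h3 := mul_le_mul_of_nonneg_left (hEle g₀ hg₀ (fun y => 1 - v y) hv1) (hh0 g₀)
    refine hdivZ _ _ (mul_nonneg (by linarith) (hh0 g₀)) ?_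
    linarith
  -- Upper bound for the original chain.
  set K := (1 + η) / (1 - η) * ρ with hKdef
  have hη1 : 0 < 1 - η := by linarith
  have hK0 : 0 ≤ K := mul_nonneg (div_nonneg (by linarith) hη1.le) hρ0
  have hKρ : K * (1 - η) = (1 + η) * ρ := by rw [hKdef]; field_simp
  set F : V → ℝ := fun y => u y + K * v y with hF
  have hF0 : ∀ y, 0 ≤ F y := fun y => add_nonneg (hu0 y) (mul_nonneg hK0 (hv0 y))
  have hEF : ∀ g ∈ N, ∑ y, E g y * F y ≤ K := by
    intro g hg
    rw [hEuv g hg]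
    have h1 := hEle g hg u hu0
    have h2 := mul_le_mul_of_nonneg_left (hleE g hg (fun y => 1 - v y) hv1) hK0
    have h3 : K * ((1 - η) * Z) = (1 + η) * U := by rw [← mul_assoc, hKρ, hρZ]; ring
    linarith
  have hEself : ∀ j ∉ N, ∑ y, E j y * F y = F j := by
    intro j hj
    rw [Finset.sum_eq_single j]
    · rw [hEd j j hj, hitProb_of_mem P (by simpa using hj) (Set.mem_singleton j), one_mul]
    · intro y _ hy
      by_cases hyN : y ∈ N
      · rw [hEN _ _ hyN, zero_mul]
      · rw [hEd j y hyN, hitProb_of_notMem P (by simpa using hj)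
          (by simpa using hy.symm), zero_mul]
    · simp
  have hup : ∀ i ∉ N, h i ≤ F i := by
    intro i hi
    rw [← hEself i hi]
    refine hitProb_le hP hS (f := fun i => ∑ y, E i y * F y)
      (fun i => Finset.sum_nonneg fun y _ => mul_nonneg (hE0 _ _) (hF0 _)) ?_ ?_ i
    · intro i hi
      have hiN : i ∉ N := fun h => hAN i h (hS hi)
      rw [hEself i hiN, hF]
      simp only
      rw [huS i hi]
      linarith [mul_nonneg hK0 (hv0 i)]
    · intro i hi
      by_cases hiN : i ∈ N
      · refine le_of_eq ?_
        simp only [Finset.mul_sum]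
        rw [Finset.sum_comm]
        refine Finset.sum_congr rfl fun y _ => ?_
        by_cases hy : y ∈ N
        · simp [hEN _ y hy]
        · have h1 : E i y = ∑ j, P i j * E j y := by
            simp only [hEd _ y hy]
            exact hitProb_step hP hP1 (by simpa using hy) (by simpa using hiN)
          rw [h1, Finset.sum_mul]
          exact Finset.sum_congr rfl fun j _ => by ring
      · rw [hEself i hiN]
        refine le_trans (Finset.sum_le_sum fun j _ => mul_le_mul_of_nonneg_left ?_ (hP i j))
          (huvstep K i hi hiN).le
        by_cases hj : j ∈ N
        · rw [huN j hj, hvN j hj, zero_add, mul_one]; exact hEF j hj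
        · exact (hEself j hj).le
  -- The collapsed chain: transition sums are expressed through functions on `V`.
  have hsum1 : ∀ (i : {v // v ∉ N}) (a : Vc N → ℝ), ∑ w, P' (some i) w * a w
      = ∑ j, P i.1 j * (if hj : j ∈ N then a none else a (some ⟨j, hj⟩)) := by
    intro i a
    rw [sum_Vc, h10, Finset.sum_mul, ← Finset.sum_add_distrib]
    refine Finset.sum_congr rfl fun j _ => ?_
    by_cases hj : j ∈ N <;> simp [hj, h11]
  have hsum0 : ∀ (a : Vc N → ℝ), ∑ w, P' none w * a w
      = ∑ j, W j * (if hj : j ∈ N then a none else a (some ⟨j, hj⟩)) := by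
    intro a
    rw [sum_Vc, h00, zero_mul, zero_add]
    refine Finset.sum_congr rfl fun j _ => ?_
    by_cases hj : j ∈ N <;> simp [hj, h01, hWN]
  have hP' : ∀ i j, 0 ≤ P' i j := by
    rintro (_ | i) (_ | j)
    · exact h00.ge
    · rw [h01]; exact hW0 _
    · rw [h10]
      exact Finset.sum_nonneg fun g _ => by split_ifs; exacts [hP _ _, le_rfl]
    · rw [h11]; exact hP _ _
  have hP'1 : ∀ i, ∑ j, P' i j = 1 := by
    rintro (_ | i)
    · have := hsum0 (fun _ => 1)
      simpa [hW1] using this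
    · have := hsum1 i (fun _ => 1)
      simpa [hP1] using this
  have hS' : collS N S ⊆ collS N A := by
    rintro w ⟨x, hx, rfl, hxS⟩
    exact ⟨x, hx, rfl, hS hxS⟩
  have hnoneA : (none : Vc N) ∉ collS N A := by
    rintro ⟨x, hx, h, -⟩
    exact absurd h (by simp)
  have hsomeA : ∀ (x : V) (hx : x ∉ N), x ∉ A → (some ⟨x, hx⟩ : Vc N) ∉ collS N A := by
    rintro x hx hxA ⟨y, hy, h, hyA⟩
    simp at h
    exact hxA (h ▸ hyA)
  set h' := hitProb P' (collS N A) (collS N S) with hh'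
  have hh'0 : ∀ i, 0 ≤ h' i := hitProb_nonneg hP' _ _
  have hlow' : ∀ (x : V) (hx : x ∉ N), u x + h' none * v x ≤ h' (some ⟨x, hx⟩) := by
    intro x hx
    have := add_hitProb_le hP hP1 hAN hS (hh'0 none)
      (f := fun j => if hj : j ∈ N then h' none else h' (some ⟨j, hj⟩))
      (fun i => by split_ifs <;> exact hh'0 _)
      (fun i hi => by
        have hiN : i ∉ N := fun h => hAN i h (hS hi)
        rw [dif_neg hiN]
        exact (hitProb_of_mem P' hS' ⟨i, hiN, rfl, hi⟩).ge)
      (fun i hi => by rw [dif_pos hi])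
      (fun i hi hiN => by
        rw [← hsum1 ⟨i, hiN⟩ h', dif_neg hiN]
        exact (hitProb_step hP' hP'1 hS' (hsomeA i hiN hi)).ge) x
    rw [dif_neg hx] at this
    exact this
  have hρh' : ρ ≤ h' none := by
    have h1 : h' none = ∑ j, W j * (if hj : j ∈ N then h' none else h' (some ⟨j, hj⟩)) := by
      rw [← hsum0]
      exact hitProb_step hP' hP'1 hS' hnoneA
    have h2 : ∑ j, W j * (u j + h' none * v j) ≤ h' none := by
      refine le_trans (Finset.sum_le_sum fun j _ => mul_le_mul_of_nonneg_left ?_ (hW0 j)) h1.ge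
      split_ifs with hj
      · rw [huN j hj, hvN j hj]; linarith
      · exact hlow' j hj
    rw [hWuv] at h2
    have := hdivZ 1 (h' none) (hh'0 _) (by linarith)
    linarith
  have hup' : h' (some ⟨i, hi⟩) ≤ u i + ρ * v i := by
    have hG : ∀ j, (if hj : j ∈ N then ρ else u j + ρ * v j) = u j + ρ * v j := by
      intro j
      split_ifs with hj
      · rw [huN j hj, hvN j hj]; ring
      · rfl
    have := hitProb_le hP' hS' (f := fun w => w.elim ρ fun x => u x.1 + ρ * v x.1)
      (by
        rintro (_ | x)
        · exact hρ0
        · exact add_nonneg (hu0 _) (mul_nonneg hρ0 (hv0 _)))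
      (by
        rintro w ⟨x, hx, rfl, hxS⟩
        simp only [Option.elim_some]
        rw [huS x hxS]
        linarith [mul_nonneg hρ0 (hv0 x)])
      (by
        rintro (_ | ⟨x, hx⟩) hw
        · rw [hsum0]
          simp only [Option.elim_none, Option.elim_some]
          simp only [hG]
          rw [hWuv]
          linarith
        · rw [hsum1]
          simp only [Option.elim_none, Option.elim_some]
          simp only [hG]
          exact (huvstep ρ x (fun hxA => hw ⟨x, hx, rfl, hxA⟩) hx).le) (some ⟨i, hi⟩)
    exact this
  have e1 := hlow i
  have e2 := hup i hi
  have e3 := hlow' i hi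
  have e4 : ρ * v i ≤ h' none * v i := mul_le_mul_of_nonneg_right hρh' (hv0 i)
  have e5 : K - ρ ≤ 4 * η := by
    have h1 : (K - ρ) * (1 - η) ≤ 4 * η * (1 - η) := by
      have h2 : η * ρ ≤ η * 1 := mul_le_mul_of_nonneg_left hρ1 hη0.le
      have h3 : η * η ≤ η * (1 / 2) := mul_le_mul_of_nonneg_left hη hη0.le
      linarith
    exact le_of_mul_le_mul_right h1 hη1
  have e6 : ρ - h g₀ ≤ 4 * η := by
    have h1 : (ρ - h g₀) * (1 + η) ≤ 4 * η * (1 + η) := by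
      have h2 : η * ρ ≤ η * 1 := mul_le_mul_of_nonneg_left hρ1 hη0.le
      have h3 : 0 ≤ η * η := mul_nonneg hη0.le hη0.le
      linarith
    exact le_of_mul_le_mul_right h1 (by linarith)
  have hvi : v i ≤ 1 := by linarith [hv1 i]
  have e7 : (K - ρ) * v i ≤ 4 * η := by
    have := mul_le_mul_of_nonneg_right e5 (hv0 i)
    have := mul_le_mul_of_nonneg_left hvi (by linarith : 0 ≤ 4 * η)
    linarith
  have e8 : (ρ - h g₀) * v i ≤ 4 * η := by
    have := mul_le_mul_of_nonneg_right e6 (hv0 i)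
    have := mul_le_mul_of_nonneg_left hvi (by linarith : 0 ≤ 4 * η)
    linarith
  have e2' : h i ≤ u i + K * v i := e2
  rw [abs_le]
  constructor <;> linarith

end compare

/-! ### The exit law of the pseudosink -/

theorem Wcoll_eq {V : Type*} [Fintype V] {c : V → V → ℝ} (hc0 : ∀ i j, 0 ≤ c i j) (N : Set V)
    (π : V → ℝ) (y : V) :
    Wcoll c N π y = outFlow c N (fun x => if x ∈ N then π x else 0) (fun j => if j = y then 1 else 0)
      / outFlow c N (fun x => if x ∈ N then π x else 0) 1 := by
  have hc : ∀ x y, ¬ 0 < c x y → c x y = 0 := fun x y h => le_antisymm (not_lt.1 h) (hc0 x y)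
  unfold Wcoll outFlow
  congr 1
  · rw [Finset.sum_filter]
    refine Finset.sum_congr rfl fun x _ => ?_
    rw [Finset.sum_eq_single y (fun j _ hj => by simp [hj]) (by simp)]
    by_cases hx : x ∈ N <;> by_cases hy : y ∈ N <;> by_cases hxy : 0 < c x y <;>
      simp [hx, hy, hxy, mul_comm, hc]
  · rw [Finset.sum_filter, Fintype.sum_prod_type]
    refine Finset.sum_congr rfl fun x _ => ?_
    rw [Finset.mul_sum]
    refine Finset.sum_congr rfl fun y _ => ?_
    by_cases hx : x ∈ N <;> by_cases hy : y ∈ N <;> by_cases hxy : 0 < c x y <;>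
      simp [hx, hy, hxy, mul_comm, hc]

theorem outFlow_congr {V : Type*} [Fintype V] (c : V → V → ℝ) {N : Set V} (p : V → ℝ)
    {f g : V → ℝ} (h : ∀ j ∉ N, f j = g j) : outFlow c N p f = outFlow c N p g := by
  unfold outFlow
  refine Finset.sum_congr rfl fun x _ => ?_
  congr 1
  refine Finset.sum_congr rfl fun j _ => ?_
  split_ifs with hj
  · rfl
  · rw [h j hj]

theorem outFlow_nonneg {V : Type*} [Fintype V] {c : V → V → ℝ} (hc0 : ∀ i j, 0 ≤ c i j)
    (N : Set V) {p f : V → ℝ} (hp : ∀ x, 0 ≤ p x) (hf : ∀ x, 0 ≤ f x) :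
    0 ≤ outFlow c N p f :=
  Finset.sum_nonneg fun x _ => mul_nonneg (hp x) (Finset.sum_nonneg fun j _ => by
    split_ifs
    · exact le_rfl
    · exact mul_nonneg (hc0 _ _) (hf _))

theorem outFlow_sum_single {V : Type*} [Fintype V] (c : V → V → ℝ) (N : Set V) (p : V → ℝ) :
    ∑ y, outFlow c N p (fun j => if j = y then 1 else 0) = outFlow c N p 1 := by
  unfold outFlow
  rw [Finset.sum_comm]
  refine Finset.sum_congr rfl fun x _ => ?_
  rw [← Finset.mul_sum, Finset.sum_comm]
  congr 1
  refine Finset.sum_congr rfl fun j _ => ?_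
  by_cases hj : j ∈ N <;> simp [hj]

/-- collapsing a pseudosink does not affect the limiting hitting
probabilities: for `i ∉ N_P` and `S ⊆ A`, `h_{iS}(ε) − h'_{iS}(ε) → 0` as `ε → 0⁺`. -/
theorem collapse_pseudosink_preserves_limit_hitProb
    {V : Type*} [Fintype V] (r c : V → V → ℝ) (A : Set V)
    (hr0 : ∀ i j, 0 ≤ r i j) (hr1 : ∀ i, ∑ j, r i j = 1)
    (hc0 : ∀ i j, 0 ≤ c i j)
    (hAr : ∀ i ∈ A, r i i = 1) (hAc : ∀ i ∈ A, ∀ j, c i j = 0)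
    (NP : Set V) (hNP : IsPseudosink r c A NP)
    (hQ : ∀ i ∈ NP, ∑ j ∈ Finset.univ.filter (· ∈ NP), r i j = 1)
    (hirr : ∀ x ∈ NP, ∀ y ∈ NP,
      Relation.ReflTransGen (fun a b => a ∈ NP ∧ b ∈ NP ∧ 0 < r a b) x y)
    (π : V → ℝ) (hπ0 : ∀ x, 0 ≤ π x)
    (hπ1 : ∑ x ∈ Finset.univ.filter (· ∈ NP), π x = 1)
    (hπs : ∀ y ∈ NP, ∑ x ∈ Finset.univ.filter (· ∈ NP), π x * r x y = π y)
    (S : Set V) (hS : S ⊆ A) (i : V) (hi : i ∉ NP) :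
    Filter.Tendsto
      (fun ε =>
        hitProb (Pmat r c ε) A S i -
        hitProb (Pmat (rColl r c NP π) (cColl c NP) ε) (collS NP A) (collS NP S)
          (some ⟨i, hi⟩))
      (𝓝[>] (0:ℝ)) (𝓝 0) := by
  obtain ⟨-, hNA, hNout, x₁, hx₁, y₁, hy₁, -, hxy₁⟩ := hNP
  have hN : ∀ g ∈ NP, ∀ j ∉ NP, r g j = 0 := fun g hg j hj =>
    le_antisymm (not_lt.1 fun h => hj (hNout g hg j h)) (hr0 g j)
  set p : V → ℝ := fun x => if x ∈ NP then π x else 0 with hpdef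
  have hp0 : ∀ x ∉ NP, p x = 0 := fun x hx => if_neg hx
  have hp : ∀ x, 0 ≤ p x := fun x => by
    simp only [hpdef]; split_ifs; exacts [hπ0 x, le_rfl]
  have hps : ∀ j, ∑ g, p g * r g j = p j := by
    intro j
    by_cases hj : j ∈ NP
    · have := hπs j hj
      rw [Finset.sum_filter] at this
      simp only [hpdef, if_pos hj, ite_mul, zero_mul]
      exact this
    · rw [hp0 j hj]
      refine Finset.sum_eq_zero fun g _ => ?_
      by_cases hg : g ∈ NP
      · rw [hN g hg j hj, mul_zero]
      · rw [hp0 g hg, zero_mul]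
  -- Irreducibility makes the stationary distribution positive on the pseudosink.
  have hpp : ∀ x ∈ NP, 0 < p x := by
    obtain ⟨x₀, hx₀, hx₀p⟩ : ∃ x ∈ NP, 0 < p x := by
      by_contra! hcon
      have : ∑ x ∈ Finset.univ.filter (· ∈ NP), π x ≤ 0 :=
        Finset.sum_nonpos fun x hx => by
          have hx' : x ∈ NP := by simpa using hx
          simpa [hpdef, hx'] using hcon x hx'
      linarith
    intro x hx
    induction hirr x₀ hx₀ x hx with
    | refl => exact hx₀p
    | @tail a b _ hab ih =>
      have h1 := ih hab.1
      rw [← hps b]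
      exact (mul_pos h1 hab.2.2).trans_le (Finset.single_le_sum (f := fun g => p g * r g b)
        (fun g _ => mul_nonneg (hp g) (hr0 _ _)) (Finset.mem_univ a))
  set D := outFlow c NP p 1 with hD
  have hDpos : 0 < D := by
    have h1 : p x₁ * c x₁ y₁ ≤ D := by
      refine le_trans (mul_le_mul_of_nonneg_left ?_ (hp x₁)) (Finset.single_le_sum
        (f := fun g => p g * ∑ j, (if j ∈ NP then 0 else c g j * (1 : V → ℝ) j))
        (fun g _ => mul_nonneg (hp g) (Finset.sum_nonneg fun j _ => ?_)) (Finset.mem_univ x₁))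
      · refine le_trans (le_of_eq ?_) (Finset.single_le_sum
          (f := fun j => if j ∈ NP then 0 else c x₁ j * (1 : V → ℝ) j) (fun j _ => ?_)
          (Finset.mem_univ y₁))
        · simp [hy₁]
        · split_ifs <;> simp [hc0]
      · split_ifs <;> simp [hc0]
    exact (mul_pos (hpp x₁ hx₁) hxy₁).trans_le h1
  set W := Wcoll c NP π with hWdef
  have hW : ∀ y, W y = outFlow c NP p (fun j => if j = y then 1 else 0) / D :=
    Wcoll_eq hc0 NP π
  have hW0 : ∀ y, 0 ≤ W y := fun y => by
    rw [hW]
    exact div_nonneg (outFlow_nonneg hc0 NP hp fun x => by split_ifs <;> simp) hDpos.le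
  have hWN : ∀ y ∈ NP, W y = 0 := fun y hy => by
    rw [hW, outFlow_congr c p (g := fun _ => 0)
      (fun j hj => if_neg fun h => hj (h ▸ hy))]
    simp [outFlow]
  have hW1 : ∑ y, W y = 1 := by
    simp only [hW]
    rw [← Finset.sum_div, outFlow_sum_single, div_self hDpos.ne']
  rw [Metric.tendsto_nhds]
  intro θ hθ
  set η := min (1 / 2) (θ / 8) with hη
  have hη0 : 0 < η := lt_min (by norm_num) (by linarith)
  have hη2 : η ≤ 1 / 2 := min_le_left _ _
  have hηθ : 4 * η < θ := by linarith [min_le_right (1 / 2) (θ / 8)]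
  obtain ⟨ε₀, hε₀, hclose⟩ := exists_harm_close hr0 hr1 hc0 hN hirr hp0 hpp hps hDpos hη0
    (by linarith)
  set T := ∑ i, rowT c i with hT
  have hT0 : 0 ≤ T := Finset.sum_nonneg fun i _ => rowT_nonneg hc0 i
  have hTi : ∀ i, rowT c i ≤ T := fun i =>
    Finset.single_le_sum (fun i _ => rowT_nonneg hc0 i) (Finset.mem_univ i)
  have hlt : 0 < min ε₀ (1 / (T + 1)) := lt_min hε₀ (by positivity)
  filter_upwards [Ioo_mem_nhdsGT hlt] with ε hε
  have hε0 : 0 < ε := hε.1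
  have hsmall : ∀ i, ε * rowT c i ≤ 1 := fun i => by
    have h1 : ε < 1 / (T + 1) := hε.2.trans_le (min_le_right _ _)
    rw [lt_div_iff₀ (by linarith)] at h1
    have h2 := mul_le_mul_of_nonneg_left (hTi i) hε0.le
    linarith
  set P := Pmat r c ε with hP
  have hP0 : ∀ i j, 0 ≤ P i j := fun i j =>
    add_nonneg (mul_nonneg (by linarith [hsmall i]) (hr0 _ _)) (mul_nonneg hε0.le (hc0 _ _))
  have hP1 : ∀ i, ∑ j, P i j = 1 := fun i => by
    have := Pmat_sum r c ε i (fun _ => 1)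
    simp only [mul_one] at this
    rw [hP, this, hr1, rowT]
    ring
  have hclose' : ∀ f, (∀ i, 0 ≤ f i) → (∀ g ∈ NP, f g = ∑ j, P g j * f j) → ∀ g ∈ NP,
      |f g * D - outFlow c NP p f| ≤ η * outFlow c NP p f := fun f hf0 hf =>
    hclose ε f (hε.2.trans_le (min_le_left _ _)) ⟨hε0, hsmall, hf0, hf⟩
  set E : V → V → ℝ := fun g y => if y ∈ NP then 0 else hitProb P NPᶜ {y} g with hEdef
  have hEN : ∀ g, ∀ y ∈ NP, E g y = 0 := fun g y hy => if_pos hy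
  have hEd : ∀ g, ∀ y ∉ NP, E g y = hitProb P NPᶜ {y} g := fun g y hy => if_neg hy
  have hEoff : ∀ g ∉ NP, ∀ y ∉ NP, E g y = if g = y then 1 else 0 := by
    intro g hg y hy
    rw [hEd g y hy]
    split_ifs with h
    · exact hitProb_of_mem P (by simpa using hy) h
    · exact hitProb_of_notMem P (by simpa using hg) (by simpa using h)
  have hEstep : ∀ g ∈ NP, ∀ y, E g y = ∑ j, P g j * E j y := by
    intro g hg y
    by_cases hy : y ∈ NP
    · simp [hEN _ y hy]
    · simp only [hEd _ y hy]
      exact hitProb_step hP0 hP1 (by simpa using hy) (by simpa using hg)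
  have hE0 : ∀ g y, 0 ≤ E g y := fun g y => by
    simp only [hEdef]
    split_ifs
    exacts [le_rfl, hitProb_nonneg hP0 _ _ _]
  have hE : ∀ g ∈ NP, ∀ y, |E g y - W y| ≤ η * W y := by
    intro g hg y
    by_cases hy : y ∈ NP
    · simp [hEN g y hy, hWN y hy]
    · have h1 := hclose' (fun j => E j y) (fun j => hE0 j y) (fun g hg => hEstep g hg y) g hg
      rw [outFlow_congr c p (fun j hj => hEoff j hj y hy)] at h1
      have h2 : outFlow c NP p (fun j => if j = y then 1 else 0) = W y * D := by
        rw [hW, div_mul_cancel₀ _ hDpos.ne']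
      rw [h2, ← sub_mul, abs_mul, abs_of_pos hDpos, ← mul_assoc] at h1
      exact le_of_mul_le_mul_right h1 hDpos
  -- The escape defect is harmonic with zero outflow, hence vanishes.
  have hE1 : ∀ g ∈ NP, ∑ y, E g y = 1 := by
    intro g hg
    have hle : ∀ j, ∑ y, E j y ≤ 1 := by
      intro j
      have := sum_hitProb_le hP0 hP1 (A := NPᶜ) (fun y : {y // y ∉ NP} => {y.1})
        (fun y => by simp)
        (fun k l hkl x hx hx' => hkl (Subtype.ext (hx.symm.trans hx')))
        (fun _ => 1) (fun _ => zero_le_one) Finset.univ (fun _ => 1) (fun _ => zero_le_one)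
        (fun _ _ _ _ => le_rfl) (fun i _ => by simp [hP1]) j
      refine le_trans (le_of_eq ?_) this
      have h2 := sum_Vc (N := NP) (fun w => w.elim 0 fun y => 1 * hitProb P NPᶜ {y.1} j)
      rw [Fintype.sum_option] at h2
      simp only [Option.elim_none, Option.elim_some, zero_add] at h2
      rw [h2]
      refine Finset.sum_congr rfl fun y _ => ?_
      by_cases hy : y ∈ NP <;> simp [hEdef, hy]
    have h1 := hclose' (fun j => 1 - ∑ y, E j y) (fun j => by linarith [hle j])
      (fun g hg => by
        simp only [mul_sub, mul_one, Finset.sum_sub_distrib, hP1]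
        congr 1
        simp only [Finset.mul_sum]
        rw [Finset.sum_comm]
        exact Finset.sum_congr rfl fun y _ => hEstep g hg y) g hg
    have h2 : outFlow c NP p (fun j => 1 - ∑ y, E j y) = 0 := by
      rw [outFlow_congr c p (g := fun _ => 0)]
      · simp [outFlow]
      · intro j hj
        rw [Finset.sum_eq_single j]
        · rw [hEoff j hj j hj, if_pos rfl, sub_self]
        · intro y _ hy
          by_cases hyN : y ∈ NP
          · exact hEN _ _ hyN
          · rw [hEoff j hj y hyN, if_neg hy.symm]
        · simp
    rw [h2, mul_zero, sub_zero] at h1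
    have h3 := abs_nonpos_iff.1 h1
    have h4 := (mul_eq_zero.1 h3).resolve_right hDpos.ne'
    linarith
  have hrow : ∀ i : {v // v ∉ NP}, rowT (cColl c NP) (some i) = rowT c i.1 := by
    intro i
    unfold rowT
    rw [sum_Vc, sum_split_mem NP (fun j => c i.1 j)]
    simp only [cColl, Finset.sum_filter]
    congr 1
  have hrow0 : rowT (cColl c NP) none = 0 := by simp [rowT, cColl]
  have hfinal := abs_hitProb_sub_le hP0 hP1 hNA hS ⟨x₁, hx₁⟩ hW0 hWN hW1 hη0 hη2 hEN hEd hE hE1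
    (P' := Pmat (rColl r c NP π) (cColl c NP) ε)
    (by simp [Pmat, rColl, cColl]) (fun y => by simp [Pmat, rColl, cColl, hrow0, hWdef])
    (fun i => by
      simp only [Pmat, hrow, rColl, cColl, hP, Finset.sum_filter, Finset.mul_sum]
      rw [← Finset.sum_add_distrib]
      refine Finset.sum_congr rfl fun g _ => ?_
      split_ifs <;> simp)
    (fun i j => by simp only [Pmat, hrow, rColl, cColl, hP]) i hi
  rw [Real.dist_eq, sub_zero]
  exact hfinal.trans_lt hηθ

end
end
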